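/- arXiv:1005.4277 — 3 statements merged into one kernel-verified Lean document; each statement's English description precedes it below -/
import Mathlib

section
/- Orthogonality relation: let a, b, c, d, e, g ∈ ℂ \ (1/2)ℤ with b+d ∉ (1/2)ℤ and a+b−e, d+e−c, a+b−g, d+g−c ∈ {0,1,…,n−1}. Then Σ_f [2f+n¦2f+1]^{−1} · [2g+n¦2g+1]^{−1} · {a b e; d c f}_tet · {d b f; a c g}_tet = δ_{e,g} (Kronecker delta), where f ranges over the complex numbers with b+d−f ∈ {0,1,…,n−1} and a+f−c ∈ {0,1,…,n−1}. -/
open Complex Finset Filter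
open scoped Matrix Kronecker Real

noncomputable section

/-- `ξ^a = exp(π √-1 a / n)` for the `2n`-th root of unity `ξ = exp(π √-1/n)`. -/
def xic (n : ℕ) (a : ℂ) : ℂ := Complex.exp (Real.pi * Complex.I * a / n)

/-- `{a} = ξ^a - ξ^{-a}`. -/
def qn (n : ℕ) (a : ℂ) : ℂ := xic n a - xic n (-a)

/-- `{k}! = {1}{2}⋯{k}`. -/
def qfac (n : ℕ) (k : ℕ) : ℂ := ∏ j ∈ Finset.range k, qn n ((j : ℂ) + 1)

-- The quantum binomial `[a¦b]`, defined (and nonzero) only when `a - b ∈ {0,1,…,n-1}`.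
open Classical in
def qbin (n : ℕ) (a b : ℂ) : ℂ :=
  if h : ∃ k : ℕ, k < n ∧ a - b = (k : ℂ) then
    ∏ j ∈ Finset.range h.choose, qn n (a - (j : ℂ)) / qn n (a - b - (j : ℂ))
  else 0

/-- `[a] = {a}/{1}`. -/
def qint (n : ℕ) (a : ℂ) : ℂ := qn n a / qn n 1

/-- `a` is not a half-integer. -/
def NotHalfInt (a : ℂ) : Prop := ∀ m : ℤ, a ≠ (m : ℂ) / 2

/-- `x ∈ {0, 1, …, n-1}` (as a complex number). -/
def InZn (n : ℕ) (x : ℂ) : Prop := ∃ k : ℕ, k < n ∧ x = (k : ℂ)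

/-- The matrix of `E` on `V^a = ℂ^n`: `E e_j = [j] e_{j-1}` (independent of `a`). -/
def Emat (n : ℕ) : Matrix (Fin n) (Fin n) ℂ :=
  Matrix.of fun i j => if (j : ℕ) = (i : ℕ) + 1 then qint n ((j : ℕ) : ℂ) else 0

/-- The matrix of `F` on `V^a`: `F e_j = [2a-j] e_{j+1}` (with `e_n = 0`). -/
def Fmat (n : ℕ) (a : ℂ) : Matrix (Fin n) (Fin n) ℂ :=
  Matrix.of fun i j => if (i : ℕ) = (j : ℕ) + 1 then qint n (2 * a - ((j : ℕ) : ℂ)) else 0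

/-- The matrix of `K` on `V^a`: `K e_j = ξ^{a-j} e_j`. -/
def Kmat (n : ℕ) (a : ℂ) : Matrix (Fin n) (Fin n) ℂ :=
  Matrix.of fun i j => if i = j then xic n (a - ((i : ℕ) : ℂ)) else 0

/-- The matrix of `K⁻¹` on `V^a`. -/
def Kinvmat (n : ℕ) (a : ℂ) : Matrix (Fin n) (Fin n) ℂ :=
  Matrix.of fun i j => if i = j then xic n (-(a - ((i : ℕ) : ℂ))) else 0

/-- The `R`-matrix `R_{a,b} : V^a ⊗ V^b → V^b ⊗ V^a`:
`R(e_u ⊗ e_v) = Σ_m {m}! ξ^{2(a-u)(b-v) - m(a-b-u+v) - m(m+1)/2} [u¦u-m] [2b-v¦2b-v-m]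
e_{v+m} ⊗ e_{u-m}`; the entry at row `(h,k)`, column `(u,v)` is the coefficient of
`e_h ⊗ e_k`, nonzero only when `h + k = u + v` and `h ≥ v` (with `m = h - v`). -/
def Rmat (n : ℕ) (a b : ℂ) : Matrix (Fin n × Fin n) (Fin n × Fin n) ℂ :=
  Matrix.of fun p q =>
    if ((p.1 : ℕ) + (p.2 : ℕ) = (q.1 : ℕ) + (q.2 : ℕ)) ∧ ((q.2 : ℕ) ≤ (p.1 : ℕ)) then
      (fun m : ℕ =>
        qfac n m *
        xic n (2 * (a - ((q.1 : ℕ) : ℂ)) * (b - ((q.2 : ℕ) : ℂ))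
            - (m : ℂ) * (a - b - ((q.1 : ℕ) : ℂ) + ((q.2 : ℕ) : ℂ))
            - (m : ℂ) * ((m : ℂ) + 1) / 2) *
        qbin n ((q.1 : ℕ) : ℂ) (((q.1 : ℕ) : ℂ) - (m : ℂ)) *
        qbin n (2 * b - ((q.2 : ℕ) : ℂ)) (2 * b - ((q.2 : ℕ) : ℂ) - (m : ℂ)))
      ((p.1 : ℕ) - (q.2 : ℕ))
    else 0

/-- The Clebsch-Gordan quantum coefficient `C^{a,b,c}_{u,v,t}`. -/
def CG (n : ℕ) (a b c : ℂ) (u v t : ℕ) : ℂ :=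
  Complex.exp (Real.pi * Complex.I * (c - a - b) / 2) *
  (-1 : ℂ) ^ ((v : ℤ) - (t : ℤ)) *
  xic n (((v : ℂ) * (2 * b - (v : ℂ) + 1) - (u : ℂ) * (2 * a - (u : ℂ) + 1)) / 2) *
  (qbin n (2 * c) (2 * c - (t : ℂ)))⁻¹ *
  qbin n (2 * c) (a + b + c - ((n : ℂ) - 1)) *
  ∑ z ∈ Finset.range (t + 1),
    (-1 : ℂ) ^ z * xic n ((2 * (z : ℂ) - (t : ℂ)) * (2 * c - (t : ℂ) + 1) / 2) *
    qbin n (a + b - c) ((u : ℂ) - (z : ℂ)) *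
    qbin n (2 * a - (u : ℂ) + (z : ℂ)) (2 * a - (u : ℂ)) *
    qbin n (2 * b - (v : ℂ) + ((t : ℂ) - (z : ℂ))) (2 * b - (v : ℂ))

-- The inclusion `Y_c^{a,b} : V^c → V^a ⊗ V^b`.
open Classical in
def Yinc (n : ℕ) (a b c : ℂ) : Matrix (Fin n × Fin n) (Fin n) ℂ :=
  Matrix.of fun p t =>
    if ((p.1 : ℕ) : ℂ) + ((p.2 : ℕ) : ℂ) - ((t : ℕ) : ℂ) = a + b - c then
      CG n a b c (p.1 : ℕ) (p.2 : ℕ) (t : ℕ)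
    else 0

-- The projection `Y_{a,b}^c : V^a ⊗ V^b → V^c`.
open Classical in
def Yproj (n : ℕ) (a b c : ℂ) : Matrix (Fin n) (Fin n × Fin n) ℂ :=
  Matrix.of fun t p =>
    if ((p.1 : ℕ) : ℂ) + ((p.2 : ℕ) : ℂ) - ((t : ℕ) : ℂ) = a + b - c then
      CG n ((n : ℂ) - 1 - b) ((n : ℂ) - 1 - a) ((n : ℂ) - 1 - c)
        (n - 1 - (p.2 : ℕ)) (n - 1 - (p.1 : ℕ)) (n - 1 - (t : ℕ))
    else 0

-- Extracts the natural number `k` with `x = k` (0 if there is none).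
open Classical in
def natIdx (x : ℂ) : ℕ := if h : ∃ k : ℕ, x = (k : ℂ) then h.choose else 0

/-- The `SL(2,ℂ)` quantum 6j-symbol `{a b e; d c f}_ξ`. -/
def sixj (n : ℕ) (a b e d c f : ℂ) : ℂ :=
  (-1 : ℂ) ^ (n - 1 + natIdx (a + f - c)) *
  (qbin n (2 * f + (n : ℂ)) (2 * f + 1))⁻¹ *
  (qfac n (natIdx (d + e - c)) * qfac n (natIdx (a + b - e)) /
    (qfac n (natIdx (b + d - f)) * qfac n (natIdx (a + f - c)))) *
  qbin n (2 * e) (a + b + e + 1 - (n : ℂ)) *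
  (qbin n (2 * e) (e + c - d))⁻¹ *
  ∑ z ∈ Finset.Icc (natIdx (d + e - c) - natIdx (b + d - f))
      (min (natIdx (d + e - c)) (natIdx (a + f - c))),
    (-1 : ℂ) ^ z * qbin n (a + f + c + 1) (2 * c + (z : ℂ) + 1) *
    qbin n ((a + c - f) + (z : ℂ)) (a + c - f) *
    qbin n ((b + f - d) + (d + e - c) - (z : ℂ)) (b + f - d) *
    qbin n ((d + c - e) + (z : ℂ)) (d + f - b)

/-- The tetrahedral symbol `{a b e; d c f}_tet = {a b e; d c f}_ξ · [2f+n¦2f+1]`. -/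
def sixjtet (n : ℕ) (a b e d c f : ℂ) : ℂ :=
  sixj n a b e d c f * qbin n (2 * f + (n : ℂ)) (2 * f + 1)

/-- The Lobachevsky function `Λ(x) = -∫_0^x log|2 sin t| dt`. -/
def lob (x : ℝ) : ℝ := -∫ t in (0 : ℝ)..x, Real.log |2 * Real.sin t|

/-- A triple of integers is admissible. -/
def Admissible (n : ℕ) (i j k : ℤ) : Prop :=
  0 < i ∧ 0 < j ∧ 0 < k ∧ i < (n : ℤ) - 1 ∧ j < (n : ℤ) - 1 ∧ k < (n : ℤ) - 1 ∧
  (n : ℤ) - 1 < i + j + k ∧ i + j + k < 2 * ((n : ℤ) - 1) ∧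
  0 < i + j - k ∧ 0 < j + k - i ∧ 0 < k + i - j ∧
  i + j - k < (n : ℤ) - 1 ∧ j + k - i < (n : ℤ) - 1 ∧ k + i - j < (n : ℤ) - 1



/-! ### Basic facts on quantum numbers -/

lemma xic_add (n : ℕ) (x y : ℂ) : xic n (x + y) = xic n x * xic n y := by
  unfold xic; rw [← Complex.exp_add]; congr 1; ring

lemma xic_neg (n : ℕ) (x : ℂ) : xic n (-x) = (xic n x)⁻¹ := by
  unfold xic; rw [← Complex.exp_neg]; congr 1; ring

lemma xic_sub (n : ℕ) (x y : ℂ) : xic n (x - y) = xic n x * (xic n y)⁻¹ := by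
  rw [sub_eq_add_neg, xic_add, xic_neg]

lemma xic_ne (n : ℕ) (x : ℂ) : xic n x ≠ 0 := Complex.exp_ne_zero _

lemma qn_neg (n : ℕ) (x : ℂ) : qn n (-x) = - qn n x := by
  unfold qn; rw [neg_neg]; ring

lemma qn_zero (n : ℕ) : qn n 0 = 0 := by
  unfold qn; simp

/-- The basic three term identity. -/
lemma qn_three (n : ℕ) (x y z : ℂ) :
    qn n x * qn n (y + z) = qn n (x + z) * qn n y + qn n z * qn n (x - y) := by
  unfold qn
  simp only [xic_neg, xic_add, xic_sub]
  have hx := xic_ne n x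
  have hy := xic_ne n y
  have hz := xic_ne n z
  field_simp
  ring

lemma qn_wz (n : ℕ) (α β γ z l : ℂ) :
    qn n (z + l + 1) * (qn n (γ + (z + l)) * qn n (γ - α - β + l))
      - qn n (γ - α + (z + l)) * qn n (γ - β + (z + l)) * qn n (l + 1)
    = -(qn n (α + z) * qn n (β + z) * qn n (l + 1))
      + qn n z * qn n (γ + z - 1) * qn n (γ - α - β + l) := by
  unfold qn
  simp only [xic_neg, xic_add, xic_sub]
  have h1 := xic_ne n α
  have h2 := xic_ne n β
  have h3 := xic_ne n γ
  have h4 := xic_ne n z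
  have h5 := xic_ne n l
  have h6 := xic_ne n 1
  field_simp
  ring

lemma xic_n (n : ℕ) (hn : 2 ≤ n) : xic n n = -1 := by
  unfold xic
  have : (n : ℂ) ≠ 0 := by exact_mod_cast (by omega : n ≠ 0)
  rw [mul_div_cancel_right₀ _ this, Complex.exp_pi_mul_I]

lemma qn_add_n (n : ℕ) (hn : 2 ≤ n) (x : ℂ) : qn n (x + n) = - qn n x := by
  unfold qn
  rw [neg_add, xic_add, xic_add, xic_neg n (n : ℂ), xic_n n hn]
  norm_num
  ring

lemma qn_eq_zero (n : ℕ) (hn : 2 ≤ n) (x : ℂ) (h : qn n x = 0) : ∃ m : ℤ, x = m * n := by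
  unfold qn xic at h
  have h0 : (n : ℂ) ≠ 0 := by exact_mod_cast (by omega : n ≠ 0)
  rw [sub_eq_zero, Complex.exp_eq_exp_iff_exists_int] at h
  obtain ⟨m, hm⟩ := h
  refine ⟨m, ?_⟩
  have hp : (Real.pi : ℂ) * Complex.I ≠ 0 := by
    simp [Real.pi_ne_zero]
  have h2 : (Real.pi : ℂ) * Complex.I * (2 * x) = (Real.pi : ℂ) * Complex.I * (2 * (m * n)) := by
    field_simp at hm
    linear_combination (Real.pi : ℂ) * Complex.I * hm
  have := mul_left_cancel₀ hp h2
  linear_combination this / 2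

/-- not an integer -/
def NotInt (x : ℂ) : Prop := ∀ m : ℤ, x ≠ m

lemma NotInt.add_int {x : ℂ} (h : NotInt x) (m : ℤ) : NotInt (x + m) := by
  intro k hk
  apply h (k - m)
  push_cast
  linear_combination hk

lemma NotInt.of_eq {x y : ℂ} (h : NotInt x) (m : ℤ) (e : y = x + m) : NotInt y :=
  e ▸ h.add_int m

lemma NotInt.qn_ne {n : ℕ} (hn : 2 ≤ n) {x : ℂ} (h : NotInt x) : qn n x ≠ 0 := by
  intro h0
  obtain ⟨m, hm⟩ := qn_eq_zero n hn x h0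
  exact h (m * n) (by rw [hm]; push_cast; ring)

lemma qn_nat_ne (n : ℕ) (hn : 2 ≤ n) (k : ℕ) (hk : 0 < k) (hkn : k < n) : qn n (k : ℂ) ≠ 0 := by
  intro h0
  obtain ⟨m, hm⟩ := qn_eq_zero n hn _ h0
  have h1 : (k : ℤ) = m * n := by exact_mod_cast hm
  have : (n : ℤ) ∣ k := ⟨m, by rw [h1]; ring⟩
  have := Int.le_of_dvd (by omega) this
  omega

/-- rising product -/
def R (n : ℕ) (x : ℂ) (m : ℕ) : ℂ := ∏ i ∈ Finset.range m, qn n (x + i)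

lemma R_zero (n : ℕ) (x : ℂ) : R n x 0 = 1 := by simp [R]

lemma R_succ (n : ℕ) (x : ℂ) (m : ℕ) : R n x (m + 1) = R n x m * qn n (x + m) := by
  simp [R, Finset.prod_range_succ]

lemma R_add (n : ℕ) (x : ℂ) (m l : ℕ) : R n x (m + l) = R n x m * R n (x + m) l := by
  unfold R
  rw [Finset.prod_range_add]
  congr 1
  refine Finset.prod_congr rfl fun i _ => ?_
  push_cast; congr 1; ring

lemma R_one (n : ℕ) (x : ℂ) : R n x 1 = qn n x := by simp [R]

lemma R_succ' (n : ℕ) (x : ℂ) (m : ℕ) : R n x (m + 1) = qn n x * R n (x + 1) m := by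
  rw [add_comm, R_add, R_one]; simp

lemma R_ne {n : ℕ} (hn : 2 ≤ n) {x : ℂ} (h : NotInt x) (m : ℕ) : R n x m ≠ 0 := by
  unfold R
  rw [Finset.prod_ne_zero_iff]
  intro i _
  exact NotInt.qn_ne hn (by exact_mod_cast h.add_int (i : ℤ))

/-- falling product -/
def Fa (n : ℕ) (x : ℂ) (m : ℕ) : ℂ := ∏ i ∈ Finset.range m, qn n (x - i)

lemma Fa_eq (n : ℕ) (x : ℂ) (m : ℕ) : Fa n x m = R n (x - m + 1) m := by
  unfold Fa R
  rw [← Finset.prod_range_reflect]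
  refine Finset.prod_congr rfl fun i hi => ?_
  rw [Finset.mem_range] at hi
  congr 1
  rw [Nat.sub_sub, Nat.cast_sub (by omega)]
  push_cast; ring

lemma Fa_add (n : ℕ) (x : ℂ) (m l : ℕ) : Fa n x (m + l) = Fa n x m * Fa n (x - m) l := by
  unfold Fa
  rw [Finset.prod_range_add]
  congr 1
  refine Finset.prod_congr rfl fun i _ => ?_
  push_cast; congr 1; ring

lemma Fa_neg (n : ℕ) (x : ℂ) (m : ℕ) : R n (-x) m = (-1) ^ m * Fa n x m := by
  unfold Fa R
  rw [← Finset.card_range m, ← Finset.prod_const, Finset.card_range, ← Finset.prod_mul_distrib]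
  refine Finset.prod_congr rfl fun i _ => ?_
  rw [show -x + (i : ℂ) = -(x - i) by ring, qn_neg]; ring

lemma Fa_ne {n : ℕ} (hn : 2 ≤ n) {x : ℂ} (h : NotInt x) (m : ℕ) : Fa n x m ≠ 0 := by
  rw [Fa_eq]
  exact R_ne hn (h.of_eq (-m + 1) (by push_cast; ring)) m

lemma qfac_eq (n : ℕ) (m : ℕ) : qfac n m = R n 1 m := by
  unfold qfac R
  refine Finset.prod_congr rfl fun i _ => ?_
  rw [add_comm]

lemma qfac_zero (n : ℕ) : qfac n 0 = 1 := by simp [qfac]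

lemma qfac_succ (n m : ℕ) : qfac n (m + 1) = qfac n m * qn n (m + 1) := by
  simp [qfac, Finset.prod_range_succ]

lemma qfac_add (n m l : ℕ) : qfac n (m + l) = qfac n m * R n (m + 1) l := by
  rw [qfac_eq, qfac_eq, R_add, add_comm (1 : ℂ)]

lemma qfac_ne (n : ℕ) (hn : 2 ≤ n) (m : ℕ) (hm : m < n) : qfac n m ≠ 0 := by
  unfold qfac
  rw [Finset.prod_ne_zero_iff]
  intro i hi
  rw [Finset.mem_range] at hi
  exact_mod_cast qn_nat_ne n hn (i + 1) (by omega) (by omega)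

lemma qn_n (n : ℕ) (hn : 2 ≤ n) : qn n n = 0 := by
  have := qn_add_n n hn 0
  rwa [zero_add, qn_zero, neg_zero] at this

lemma qfac_ge (n : ℕ) (hn : 2 ≤ n) (m : ℕ) (hm : n ≤ m) : qfac n m = 0 := by
  unfold qfac
  rw [Finset.prod_eq_zero_iff]
  refine ⟨n - 1, Finset.mem_range.2 (by omega), ?_⟩
  rw [Nat.cast_sub (by omega)]
  simpa using qn_n n hn

lemma qfac_compl (n : ℕ) (hn : 2 ≤ n) (m : ℕ) (hm : m < n) :
    qfac n (n - 1 - m) * qfac n m = qfac n (n - 1) := by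
  induction m with
  | zero => simp [qfac_zero]
  | succ m ih =>
    have h := ih (by omega)
    obtain ⟨r, hr⟩ : ∃ r, n = r + 1 + (m + 1) := ⟨n - (m + 2), by omega⟩
    rw [show n - 1 - m = r + 1 by omega, qfac_succ] at h
    rw [show n - 1 - (m + 1) = r by omega, qfac_succ, ← h]
    have : qn n ((r : ℂ) + 1) = qn n ((m : ℂ) + 1) := by
      have h1 : (r : ℂ) + 1 = -((m : ℂ) + 1) + n := by
        rw [hr]; push_cast; ring
      rw [h1, qn_add_n n hn, qn_neg, neg_neg]
    rw [this]; ring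

/-- full products change sign under translation -/
lemma R_shift (n : ℕ) (hn : 2 ≤ n) (x : ℂ) : R n (x + 1) n = - R n x n := by
  obtain ⟨r, hr⟩ : ∃ r, n = r + 1 := ⟨n - 1, by omega⟩
  have h1 : R n (x + 1) n = R n (x + 1) r * qn n (x + 1 + r) := by
    conv_lhs => rw [show R n (x+1) n = R n (x+1) (r + 1) by rw [← hr]]
    rw [R_succ]
  have h2 : R n x n = qn n x * R n (x + 1) r := by
    conv_lhs => rw [show R n x n = R n x (r + 1) by rw [← hr]]
    rw [R_succ']
  have h3 : qn n (x + 1 + r) = - qn n x := by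
    rw [← qn_add_n n hn x]; congr 1; 
    have : (n : ℂ) = r + 1 := by exact_mod_cast hr
    rw [this]; ring
  rw [h1, h2, h3]; ring

lemma R_shift_nat (n : ℕ) (hn : 2 ≤ n) (x : ℂ) (m : ℕ) : R n (x + m) n = (-1) ^ m * R n x n := by
  induction m with
  | zero => simp
  | succ m ih =>
    rw [show x + ((m + 1 : ℕ) : ℂ) = (x + m) + 1 by push_cast; ring, R_shift n hn, ih, pow_succ]
    ring

/-- inverse factorial of an integer -/
def ifz (n : ℕ) (m : ℤ) : ℂ := if m < 0 then 0 else (qfac n m.toNat)⁻¹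

lemma ifz_neg (n : ℕ) (m : ℤ) (h : m < 0) : ifz n m = 0 := by simp [ifz, h]

lemma ifz_nat (n m : ℕ) : ifz n (m : ℤ) = (qfac n m)⁻¹ := by
  unfold ifz; rw [if_neg (by omega)]; simp

lemma ifz_of_eq (n : ℕ) (m : ℤ) (k : ℕ) (h : m = k) : ifz n m = (qfac n k)⁻¹ := by
  rw [h, ifz_nat]

lemma qbin_eq (n : ℕ) (x y : ℂ) (k : ℕ) (hk : k < n) (h : x - y = k) :
    qbin n x y = R n (y + 1) k * (qfac n k)⁻¹ := by
  have hex : ∃ k : ℕ, k < n ∧ x - y = (k : ℂ) := ⟨k, hk, h⟩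
  unfold qbin
  rw [dif_pos hex]
  have hc : hex.choose = k := by
    have := h.symm.trans hex.choose_spec.2
    exact_mod_cast this.symm
  rw [hc, Finset.prod_div_distrib, div_eq_mul_inv, h]
  have hx : x = y + k := by rw [← h]; ring
  congr 1
  · rw [show R n (y+1) k = Fa n x k by rw [Fa_eq, hx]; congr 1; ring]
    rfl
  · congr 1
    rw [show (∏ j ∈ Finset.range k, qn n ((k : ℂ) - j)) = Fa n k k from rfl, Fa_eq, qfac_eq]
    congr 1; ring

lemma natIdx_eq (x : ℂ) (k : ℕ) (h : x = k) : natIdx x = k := by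
  have hex : ∃ k : ℕ, x = (k : ℂ) := ⟨k, h⟩
  unfold natIdx
  rw [dif_pos hex]
  have := h.symm.trans hex.choose_spec
  exact_mod_cast this.symm

/-! ### The q-Saalschütz summation -/

lemma saal (n : ℕ) (hn : 2 ≤ n) (α β γ : ℂ) (m : ℕ) (hm : m < n) :
    ∑ z ∈ Finset.range (m + 1), (qfac n z)⁻¹ * (qfac n (m - z))⁻¹ * R n α z * R n β z *
      R n (γ + z) (m - z) * R n (γ - α - β) (m - z)
    = (qfac n m)⁻¹ * R n (γ - α) m * R n (γ - β) m := by
  induction m with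
  | zero => simp [R_zero, qfac_zero]
  | succ m ih =>
    have ih' := ih (by omega)
    have hm1 : qn n ((m : ℂ) + 1) ≠ 0 := by
      exact_mod_cast qn_nat_ne n hn (m + 1) (by omega) hm
    set G : ℕ → ℂ := fun z => -(R n α z * R n β z * R n (γ + z - 1) (m + 1 - z) *
      R n (γ - α - β) (m + 1 - z) * qn n z * (qfac n z)⁻¹ * (qfac n (m + 1 - z))⁻¹) with hG
    have key : ∀ z ∈ Finset.range (m + 1),
        qn n ((m : ℂ) + 1) * ((qfac n z)⁻¹ * (qfac n (m + 1 - z))⁻¹ * R n α z * R n β z *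
          R n (γ + z) (m + 1 - z) * R n (γ - α - β) (m + 1 - z)) =
        qn n (γ - α + m) * qn n (γ - β + m) *
          ((qfac n z)⁻¹ * (qfac n (m - z))⁻¹ * R n α z * R n β z *
            R n (γ + z) (m - z) * R n (γ - α - β) (m - z)) + (G (z + 1) - G z) := by
      intro z hz
      rw [Finset.mem_range] at hz
      obtain ⟨l, rfl⟩ : ∃ l, m = z + l := ⟨m - z, by omega⟩
      have hw := qn_wz n α β γ z l
      simp only [hG]
      rw [show z + l + 1 - z = l + 1 by omega, show z + l - z = l by omega,
        show z + l + 1 - (z + 1) = l by omega]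
      have e1 : R n (γ + z - 1) (l + 1) = qn n (γ + z - 1) * R n (γ + z) l := by
        rw [R_succ']; congr 2; ring
      have e2 : R n (γ + ((z + 1 : ℕ) : ℂ) - 1) l = R n (γ + z) l := by
        congr 1; push_cast; ring
      rw [e1, e2, R_succ, R_succ n α, R_succ n β, R_succ n (γ - α - β), qfac_succ n l,
        qfac_succ n z]
      have f1 : qfac n z ≠ 0 := qfac_ne n hn z (by omega)
      have f2 : qfac n l ≠ 0 := qfac_ne n hn l (by omega)
      have f3 : qn n ((z : ℂ) + 1) ≠ 0 := by
        exact_mod_cast qn_nat_ne n hn (z + 1) (by omega) (by omega)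
      have f4 : qn n ((l : ℂ) + 1) ≠ 0 := by
        exact_mod_cast qn_nat_ne n hn (l + 1) (by omega) (by omega)
      push_cast
      rw [show γ + (z : ℂ) + l = γ + (z + l) by ring]
      field_simp
      linear_combination (R n α z * R n β z * R n (γ + z) l * R n (γ - α - β) l) * hw
    have hsum : qn n ((m : ℂ) + 1) * ∑ z ∈ Finset.range (m + 1 + 1),
        (qfac n z)⁻¹ * (qfac n (m + 1 - z))⁻¹ * R n α z * R n β z *
          R n (γ + z) (m + 1 - z) * R n (γ - α - β) (m + 1 - z) =
        qn n (γ - α + m) * qn n (γ - β + m) * ((qfac n m)⁻¹ * R n (γ - α) m * R n (γ - β) m) := by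
      rw [Finset.sum_range_succ, mul_add, Finset.mul_sum, Finset.sum_congr rfl key,
        Finset.sum_add_distrib, ← Finset.mul_sum, ih', Finset.sum_range_sub]
      have g0 : G 0 = 0 := by simp [hG, qn_zero]
      have g1 : G (m + 1) = -(qn n ((m : ℂ) + 1) * ((qfac n (m + 1))⁻¹ *
          R n α (m + 1) * R n β (m + 1))) := by
        simp [hG, R_zero, qfac_zero]; ring
      rw [g0, g1]
      simp [R_zero, qfac_zero]
    apply mul_left_cancel₀ hm1
    rw [hsum, qfac_succ, R_succ, R_succ]
    have f1 : qfac n m ≠ 0 := qfac_ne n hn m (by omega)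
    field_simp

/-! ### The Sears (Whipple) transformation -/

lemma R_negnat (n : ℕ) (hn : 2 ≤ n) (k z : ℕ) (hk : k < n) :
    R n (-(k : ℂ)) z = (-1) ^ z * qfac n k * ifz n ((k : ℤ) - z) := by
  rw [Fa_neg]
  rcases le_or_gt z k with h | h
  · obtain ⟨l, rfl⟩ : ∃ l, k = l + z := ⟨k - z, by omega⟩
    rw [ifz_of_eq n _ l (by push_cast; ring), Fa_eq, qfac_add]
    have := qfac_ne n hn l (by omega)
    field_simp
    congr 1; push_cast; ring
  · rw [ifz_neg n _ (by omega), mul_zero]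
    rw [show Fa n k z = 0 from Finset.prod_eq_zero (i := k) (Finset.mem_range.2 h)
      (by rw [sub_self, qn_zero]), mul_zero]

lemma R_ifz (n : ℕ) (hn : 2 ≤ n) (s : ℤ) (y x : ℕ) (h : s + y + x < n) :
    R n ((s : ℂ) + 1 + y) x * ifz n (s + y + x) = ifz n (s + y) := by
  rcases lt_or_ge (s + y + x) 0 with h1 | h1
  · rw [ifz_neg n _ h1, ifz_neg n _ (by omega), mul_zero]
  rcases lt_or_ge (s + y) 0 with h2 | h2
  · rw [ifz_neg n (s + y) h2]
    have : R n ((s : ℂ) + 1 + y) x = 0 := by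
      refine Finset.prod_eq_zero (i := (-(s + y) - 1).toNat) (Finset.mem_range.2 (by omega)) ?_
      have e : (((-(s + y) - 1).toNat : ℕ) : ℂ) = -(s + y) - 1 := by
        have : (((-(s + y) - 1).toNat : ℕ) : ℤ) = -(s + y) - 1 := by omega
        exact_mod_cast congrArg (Int.cast : ℤ → ℂ) this
      rw [e, ← qn_zero n]; congr 1; ring
    rw [this, zero_mul]
  · obtain ⟨t, ht⟩ : ∃ t : ℕ, s + y = t := ⟨(s + y).toNat, by omega⟩
    have ht' : (s : ℂ) + y = t := by exact_mod_cast congrArg (Int.cast : ℤ → ℂ) ht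
    rw [ifz_of_eq n _ (t + x) (by push_cast; omega), ifz_of_eq n _ t ht, qfac_add,
      show (s : ℂ) + 1 + y = t + 1 by rw [← ht']; ring]
    have h3 := qfac_ne n hn (t + x) (by omega)
    rw [qfac_add] at h3
    have h4 := left_ne_zero_of_mul h3
    have h5 := right_ne_zero_of_mul h3
    field_simp

/-- first expansion -/
lemma expand1 (n : ℕ) (hn : 2 ≤ n) (A : ℂ) (p k z : ℕ) (hk : k < n) (hz : z < n)
    (hpk : (p : ℤ) - k + z < n) :
    qfac n k * ((-1) ^ z * ifz n ((k : ℤ) - z) * R n (A - k + 1) z * (qfac n z)⁻¹ *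
      ifz n ((p : ℤ) - k + z)) =
    ∑ y ∈ Finset.range (z + 1), (qfac n y)⁻¹ * (qfac n (z - y))⁻¹ * R n (p - A) y *
      R n (p + 1) y * R n (A - k - p) (z - y) * ifz n ((p : ℤ) - k + y) := by
  have hs := saal n hn (p - A) (p + 1) (p - k + 1) z hz
  rw [show (p : ℂ) - k + 1 - (p - A) = A - k + 1 by ring,
    show (p : ℂ) - k + 1 - (p + 1) = -k by ring, R_negnat n hn k z hk] at hs
  have hs2 := congrArg (fun t => t * ifz n ((p : ℤ) - k + z)) hs
  simp only [Finset.sum_mul] at hs2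
  rw [show qfac n k * ((-1) ^ z * ifz n ((k : ℤ) - z) * R n (A - k + 1) z * (qfac n z)⁻¹ *
      ifz n ((p : ℤ) - k + z)) = (qfac n z)⁻¹ * R n (A - k + 1) z *
        ((-1) ^ z * qfac n k * ifz n (↑k - ↑z)) * ifz n (↑p - ↑k + ↑z) by ring, ← hs2]
  refine Finset.sum_congr rfl fun y hy => ?_
  rw [Finset.mem_range] at hy
  have hr := R_ifz n hn ((p : ℤ) - k) y (z - y) (by push_cast [Nat.cast_sub (show y ≤ z by omega)]; omega)
  rw [show (p : ℤ) - k + y + ((z - y : ℕ) : ℤ) = p - k + z by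
    push_cast [Nat.cast_sub (show y ≤ z by omega)]; ring] at hr
  rw [← hr]
  push_cast
  rw [show A - (k : ℂ) + 1 - (p + 1) = A - k - p by ring]
  ring

lemma sears (n : ℕ) (hn : 2 ≤ n) (A B D C : ℂ) (p q j k : ℕ) (hpq : p + q = j + k)
    (hq : q < n) (hjn : j < n) (hk : k < n)
    (hC : C = A + B + D - 2 * (p + q)) :
    qfac n k * ∑ z ∈ Finset.range (q + 1), (-1) ^ z * ifz n ((k : ℤ) - z) * R n (A - k + 1) z *
      (qfac n z)⁻¹ * ifz n ((p : ℤ) - k + z) *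
        (R n (B - j + 1) (q - z) * (qfac n (q - z))⁻¹ * R n (D - q + 1) z *
          R n (C + 2 + z) (q - z)) =
    ∑ y ∈ Finset.range (q + 1), R n (p - A) y * R n (p + 1) y * R n (D - q + 1) y *
      R n (B + D - 2 * (p + q) + 2 + k + p + y) (q - y) *
      R n (A + B - (p + q) - p + 1) (q - y) * (qfac n y)⁻¹ * ifz n ((p : ℤ) - k + y) *
      (qfac n (q - y))⁻¹ := by
  have hj : (j : ℂ) = p + q - k := by
    have : (p : ℂ) + q = j + k := by exact_mod_cast hpq
    rw [this]; ring
  rw [Finset.mul_sum]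
  have step1 : ∀ z ∈ Finset.range (q + 1),
      qfac n k * ((-1) ^ z * ifz n ((k : ℤ) - z) * R n (A - k + 1) z *
      (qfac n z)⁻¹ * ifz n ((p : ℤ) - k + z) *
        (R n (B - j + 1) (q - z) * (qfac n (q - z))⁻¹ * R n (D - q + 1) z *
          R n (C + 2 + z) (q - z))) =
      ∑ y ∈ Finset.range (z + 1), (qfac n y)⁻¹ * (qfac n (z - y))⁻¹ * R n (p - A) y *
      R n (p + 1) y * R n (A - k - p) (z - y) * ifz n ((p : ℤ) - k + y) *
        (R n (B - j + 1) (q - z) * (qfac n (q - z))⁻¹ * R n (D - q + 1) z *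
          R n (C + 2 + z) (q - z)) := by
    intro z hz
    rw [Finset.mem_range] at hz
    rw [← Finset.sum_mul, ← expand1 n hn A p k z hk (by omega) (by omega)]; ring
  rw [Finset.sum_congr rfl step1]
  rw [Finset.sum_comm' (t' := Finset.range (q + 1)) (s' := fun y => Finset.Ico y (q + 1))
    (by intro x y; simp only [Finset.mem_range, Finset.mem_Ico]; omega)]
  refine Finset.sum_congr rfl fun y hy => ?_
  rw [Finset.mem_range] at hy
  rw [Finset.sum_Ico_eq_sum_range]
  obtain ⟨m, rfl⟩ : ∃ m, q = y + m := ⟨q - y, by omega⟩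
  rw [show y + m + 1 - y = m + 1 by omega, show y + m - y = m by omega]
  have hs := saal n hn (A - k - p) (D - ((y + m : ℕ) : ℂ) + 1 + y) (C + 2 + y) m (by omega)
  have e1 : C + 2 + y - (A - k - p) - (D - ((y + m : ℕ) : ℂ) + 1 + y) = B - j + 1 := by
    rw [hC, hj]; push_cast; ring
  have e2 : C + 2 + y - (A - k - p) =
      B + D - 2 * (p + ((y + m : ℕ) : ℂ)) + 2 + k + p + y := by
    rw [hC]; push_cast; ring
  have e3 : C + 2 + y - (D - ((y + m : ℕ) : ℂ) + 1 + y) =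
      A + B - (p + ((y + m : ℕ) : ℂ)) - p + 1 := by
    rw [hC]; push_cast; ring
  rw [e1, e2, e3] at hs
  have hs2 := congrArg (fun t => t * (R n (p - A) y * R n (p + 1) y *
    R n (D - ((y + m : ℕ) : ℂ) + 1) y * (qfac n y)⁻¹ * ifz n ((p : ℤ) - k + y))) hs
  simp only [Finset.sum_mul] at hs2
  trans (qfac n m)⁻¹ * R n (B + D - 2 * (p + ((y + m : ℕ) : ℂ)) + 2 + k + p + y) m *
      R n (A + B - (p + ((y + m : ℕ) : ℂ)) - p + 1) m *
      (R n (p - A) y * R n (p + 1) y *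
        R n (D - ((y + m : ℕ) : ℂ) + 1) y * (qfac n y)⁻¹ * ifz n ((p : ℤ) - k + y))
  · rw [← hs2]
    refine Finset.sum_congr rfl fun x hx => ?_
    rw [Finset.mem_range] at hx
    rw [show y + x - y = x by omega, show y + m - (y + x) = m - x by omega, R_add n _ y x,
      show C + 2 + ((y + x : ℕ) : ℂ) = C + 2 + y + x by push_cast; ring]
    ring
  · ring

/-! ### Two telescoping sums -/

lemma orthB (n : ℕ) (hn : 2 ≤ n) (t : ℂ) (ht : NotInt t) (m : ℕ) (hm : m < n) :
    ∑ i ∈ Finset.range (m + 1), (-1 : ℂ) ^ i * qn n (t + 2 * i) * (qfac n (m - i))⁻¹ *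
      (qfac n i)⁻¹ * (R n (t + i) (m + 1))⁻¹ = if m = 0 then 1 else 0 := by
  rcases Nat.eq_zero_or_pos m with rfl | hpos
  · have := ht.qn_ne hn
    simp [R_one, qfac_zero, this]
  rw [if_neg (by omega)]
  have hm0 : qn n (m : ℂ) ≠ 0 := qn_nat_ne n hn m hpos hm
  have hti : ∀ i : ℕ, NotInt (t + i) := fun i => by exact_mod_cast ht.add_int (i : ℤ)
  set H : ℕ → ℂ := fun i => (-1 : ℂ) ^ i * (qfac n (m - i))⁻¹ * qn n i * (qfac n i)⁻¹ *
    (R n (t + i) m)⁻¹ with hH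
  have key : ∀ i ∈ Finset.range m, qn n (m : ℂ) * ((-1 : ℂ) ^ i * qn n (t + 2 * i) *
      (qfac n (m - i))⁻¹ * (qfac n i)⁻¹ * (R n (t + i) (m + 1))⁻¹) = H i - H (i + 1) := by
    intro i hi
    rw [Finset.mem_range] at hi
    obtain ⟨l, rfl⟩ : ∃ l, m = i + l + 1 := ⟨m - i - 1, by omega⟩
    simp only [hH]
    rw [show i + l + 1 - i = l + 1 by omega, show i + l + 1 - (i + 1) = l by omega]
    have h3 := qn_three n (t + 2 * i) i (l + 1)
    have e1 : R n (t + i) (i + l + 1 + 1) =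
        R n (t + i) (i + l + 1) * qn n (t + 2 * i + (l + 1)) := by
      rw [R_succ]; congr 2; push_cast; ring
    have e2 : R n (t + i) (i + l + 1 + 1) =
        qn n (t + 2 * i - i) * R n (t + ((i + 1 : ℕ) : ℂ)) (i + l + 1) := by
      rw [R_succ']; congr 2 <;> (push_cast; ring)
    have n0 := R_ne hn (hti i) (i + l + 1 + 1)
    have n1 := R_ne hn (hti i) (i + l + 1)
    have n2 := R_ne hn (hti (i + 1)) (i + l + 1)
    have f1 : (R n (t + i) (i + l + 1))⁻¹ = qn n (t + 2 * i + (l + 1)) *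
        (R n (t + i) (i + l + 1 + 1))⁻¹ := by
      rw [e1] at n0 ⊢
      rw [mul_inv_rev, ← mul_assoc, mul_inv_cancel₀ (right_ne_zero_of_mul n0), one_mul]
    have f2 : (R n (t + ((i + 1 : ℕ) : ℂ)) (i + l + 1))⁻¹ = qn n (t + 2 * i - i) *
        (R n (t + i) (i + l + 1 + 1))⁻¹ := by
      rw [e2] at n0 ⊢
      rw [mul_inv, ← mul_assoc, mul_inv_cancel₀ (left_ne_zero_of_mul n0), one_mul]
    rw [f1, f2, qfac_succ n l, qfac_succ n i]
    have g1 : qfac n i ≠ 0 := qfac_ne n hn i (by omega)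
    have g2 : qfac n l ≠ 0 := qfac_ne n hn l (by omega)
    have g3 : qn n ((i : ℂ) + 1) ≠ 0 := by
      exact_mod_cast qn_nat_ne n hn (i + 1) (by omega) (by omega)
    have g4 : qn n ((l : ℂ) + 1) ≠ 0 := by
      exact_mod_cast qn_nat_ne n hn (l + 1) (by omega) (by omega)
    push_cast
    generalize (R n (t + i) (i + l + 1 + 1))⁻¹ = Q
    rw [show (i : ℂ) + l + 1 = i + (l + 1) by ring, pow_succ]
    generalize qn n (t + 2 * i) = a1 at h3 ⊢
    generalize qn n (t + 2 * i + (l + 1)) = a2 at h3 ⊢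
    generalize qn n (t + 2 * i - i) = a3 at h3 ⊢
    field_simp
    linear_combination Q * h3
  apply mul_left_cancel₀ hm0
  rw [Finset.mul_sum, Finset.sum_range_succ, Finset.sum_congr rfl key, mul_zero,
    Finset.sum_range_sub']
  have h0 : H 0 = 0 := by simp [hH, qn_zero]
  have hl : H m = qn n (m : ℂ) * ((-1 : ℂ) ^ m * qn n (t + 2 * m) *
      (qfac n (m - m))⁻¹ * (qfac n m)⁻¹ * (R n (t + m) (m + 1))⁻¹) := by
    simp only [hH]
    rw [R_succ, show t + (m : ℂ) + m = t + 2 * m by ring]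
    have n1 := R_ne hn (hti m) m
    have n2 : qn n (t + 2 * m) ≠ 0 :=
      NotInt.qn_ne hn (ht.of_eq (2 * m) (by push_cast; ring))
    generalize qn n (t + 2 * m) = a1 at n2 ⊢
    field_simp
  rw [h0, ← hl]; ring

lemma orthA (n : ℕ) (hn : 2 ≤ n) (s : ℂ) (hs : NotInt s) (m : ℕ) (hm : m + 1 < n) :
    ∑ i ∈ Finset.range (m + 2), (-1 : ℂ) ^ i * R n (s - i) m * (qfac n i)⁻¹ *
      (qfac n (m + 1 - i))⁻¹ = 0 := by
  have hm0 : qn n ((m : ℂ) + 1) ≠ 0 := by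
    exact_mod_cast qn_nat_ne n hn (m + 1) (by omega) hm
  have hs0 : qn n (s - 1) ≠ 0 := NotInt.qn_ne hn (hs.of_eq (-1) (by push_cast; ring))
  set H : ℕ → ℂ := fun i => (-1 : ℂ) ^ i * qn n i * (qfac n i)⁻¹ * R n (s - i) (m + 1) *
    (qfac n (m + 1 - i))⁻¹ with hH
  have key : ∀ i ∈ Finset.range (m + 1), qn n (s - 1) * qn n ((m : ℂ) + 1) * ((-1 : ℂ) ^ i *
      R n (s - i) m * (qfac n i)⁻¹ * (qfac n (m + 1 - i))⁻¹) = H i - H (i + 1) := by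
    intro i hi
    rw [Finset.mem_range] at hi
    obtain ⟨l, rfl⟩ : ∃ l, m = i + l := ⟨m - i, by omega⟩
    simp only [hH]
    rw [show i + l + 1 - i = l + 1 by omega, show i + l + 1 - (i + 1) = l by omega]
    have h3 := qn_three n (s - 1) i (l + 1)
    have e1 : R n (s - i) (i + l + 1) = R n (s - i) (i + l) * qn n (s - 1 + (l + 1)) := by
      rw [R_succ]; congr 2; push_cast; ring
    have e2 : R n (s - ((i + 1 : ℕ) : ℂ)) (i + l + 1) =
        qn n (s - 1 - i) * R n (s - i) (i + l) := by
      rw [R_succ']; congr 2 <;> (push_cast; ring)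
    rw [e1, e2, qfac_succ n l, qfac_succ n i]
    have g1 : qfac n i ≠ 0 := qfac_ne n hn i (by omega)
    have g2 : qfac n l ≠ 0 := qfac_ne n hn l (by omega)
    have g3 : qn n ((i : ℂ) + 1) ≠ 0 := by
      exact_mod_cast qn_nat_ne n hn (i + 1) (by omega) (by omega)
    have g4 : qn n ((l : ℂ) + 1) ≠ 0 := by
      exact_mod_cast qn_nat_ne n hn (l + 1) (by omega) (by omega)
    push_cast
    rw [show (i : ℂ) + l + 1 = i + (l + 1) by ring, pow_succ]
    field_simp
    linear_combination R n (s - i) (i + l) * h3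
  apply mul_left_cancel₀ (mul_ne_zero hs0 hm0)
  rw [Finset.mul_sum, Finset.sum_range_succ, Finset.sum_congr rfl key, mul_zero,
    Finset.sum_range_sub']
  have h0 : H 0 = 0 := by simp [hH, qn_zero]
  have hl : H (m + 1) = qn n (s - 1) * qn n ((m : ℂ) + 1) * ((-1 : ℂ) ^ (m + 1) *
      R n (s - ((m + 1 : ℕ) : ℂ)) m * (qfac n (m + 1))⁻¹ * (qfac n (m + 1 - (m + 1)))⁻¹) := by
    simp only [hH]
    rw [R_succ, show s - ((m + 1 : ℕ) : ℂ) + m = s - 1 by push_cast; ring]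
    push_cast
    ring
  rw [h0, ← hl]; ring

/-! ### Orthogonality of the triangular matrices -/

lemma orthB' (n : ℕ) (hn : 2 ≤ n) (τ : ℂ) (ht : NotInt τ) (N u v : ℕ) (huN : u ≤ N)
    (hu : u < n) (hv : v ≤ N) (hvn : N - v < n) :
    ∑ j ∈ Finset.range n, (if j ≤ N ∧ N - j < n then (-1 : ℂ) ^ (N - j) *
      qn n (τ + 2 * ((N - j : ℕ) : ℂ)) * ifz n ((u : ℤ) - (N - j : ℕ)) *
      ifz n (((N - j : ℕ) : ℤ) - v) * R n (τ + ((N - j : ℕ) : ℂ)) v *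
      (R n (τ + ((N - j : ℕ) : ℂ)) (u + 1))⁻¹ else 0) = if u = v then (-1) ^ u else 0 := by
  rcases lt_or_ge u v with h | h
  · rw [if_neg (by omega)]
    refine Finset.sum_eq_zero fun j _ => ?_
    split_ifs with hj
    · rcases lt_or_ge (N - j) v with h1 | h1
      · rw [ifz_neg n (((N - j : ℕ) : ℤ) - v) (by omega)]; ring
      · rw [ifz_neg n ((u : ℤ) - (N - j : ℕ)) (by omega)]; ring
    · rfl
  obtain ⟨m, rfl⟩ : ∃ m, u = v + m := ⟨u - v, by omega⟩
  have hb := orthB n hn (τ + 2 * v) (ht.of_eq (2 * v) (by push_cast; ring)) m (by omega)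
  have hb2 := congrArg (fun t => (-1 : ℂ) ^ v * t) hb
  simp only [Finset.mul_sum] at hb2
  trans (-1 : ℂ) ^ v * (if m = 0 then 1 else 0)
  swap
  · rcases Nat.eq_zero_or_pos m with rfl | h0
    · simp
    · rw [if_neg (by omega), if_neg (by omega), mul_zero]
  rw [← hb2]
  rw [← Finset.sum_filter]
  symm
  refine Finset.sum_of_injOn (fun i => N - v - i) ?_ ?_ ?_ ?_
  · intro i hi i' hi' h
    simp only [Finset.coe_range, Set.mem_Iio] at hi hi'
    simp only at h
    omega
  · intro i hi
    simp only [Finset.coe_range, Set.mem_Iio] at hi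
    simp only [Finset.coe_filter, Finset.mem_range, Set.mem_ofPred_eq]
    omega
  · intro j hj hj'
    simp only [Finset.mem_filter, Finset.mem_range] at hj
    simp only [Finset.coe_range, Set.mem_image, Set.mem_Iio, not_exists, not_and] at hj'
    rcases lt_or_ge (N - j) v with h1 | h1
    · rw [ifz_neg n (((N - j : ℕ) : ℤ) - v) (by omega)]; ring
    · rw [ifz_neg n (((v + m : ℕ) : ℤ) - (N - j : ℕ)) ?_]
      · ring
      · by_contra hcon
        exact hj' (N - j - v) (by omega) (by omega)
  · intro i hi
    rw [Finset.mem_range] at hi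
    rw [show N - (N - v - i) = v + i by omega, ifz_of_eq n _ (m - i) (by omega),
      ifz_of_eq n _ i (by omega), pow_add]
    rw [show v + m + 1 = v + (m + 1) by ring, R_add n _ v (m + 1),
      show τ + ((v + i : ℕ) : ℂ) + v = τ + 2 * v + i by push_cast; ring,
      show τ + 2 * ((v + i : ℕ) : ℂ) = τ + 2 * v + 2 * i by push_cast; ring]
    have := R_ne hn (ht.of_eq (y := τ + ((v + i : ℕ) : ℂ)) (v + i) (by push_cast; ring)) v
    field_simp

lemma orthA' (n : ℕ) (hn : 2 ≤ n) (ρ : ℂ) (hr : NotInt ρ) (N p r : ℕ) (hp : p ≤ N) (hrN : r ≤ N)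
    (hpn : N - p < n) (hrn : r < n) :
    ∑ u ∈ Finset.range (N + 1), (if u < n ∧ N - u < n then (-1 : ℂ) ^ u * ifz n ((u : ℤ) - p) *
      ifz n ((r : ℤ) - u) * R n (ρ - N - p + 1) (N - u) * R n (ρ - r - u + 2) u else 0)
    = if p = r then (-1) ^ p * R n (ρ - N - p + 1) (N - p) * R n (ρ - 2 * p + 2) p else 0 := by
  rcases lt_trichotomy p r with h | h | h
  · rw [if_neg (by omega)]
    obtain ⟨m, rfl⟩ : ∃ m, r = p + m + 1 := ⟨r - p - 1, by omega⟩
    set x0 : ℂ := ρ - 2 * N with hx0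
    have hx : NotInt x0 := hr.of_eq (-2 * N) (by rw [hx0]; push_cast; ring)
    have hc0 : R n x0 (N - p + 1) ≠ 0 := R_ne hn hx _
    have ho := orthA n hn (ρ - (p + m + 1 : ℕ) - p + 2)
      (hr.of_eq (-(p + m + 1 : ℕ) - p + 2) (by push_cast; ring)) m (by omega)
    apply mul_left_cancel₀ hc0
    rw [mul_zero]
    trans (-1) ^ p * R n x0 (2 * N + 2 - (p + m + 1)) * 0
    swap
    · ring
    rw [← ho, Finset.mul_sum, Finset.mul_sum]
    symm
    refine Finset.sum_of_injOn (fun i => p + i) ?_ ?_ ?_ ?_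
    · intro i hi i' hi' h
      simp only at h
      omega
    · intro i hi
      simp only [Finset.coe_range, Set.mem_Iio] at hi ⊢
      omega
    · intro u hu hu'
      rw [Finset.mem_range] at hu
      simp only [Finset.coe_range, Set.mem_image, Set.mem_Iio, not_exists, not_and] at hu'
      split_ifs with hc
      · rcases lt_or_ge u p with h1 | h1
        · rw [ifz_neg n ((u : ℤ) - p) (by omega)]; ring
        · rw [ifz_neg n (((p + m + 1 : ℕ) : ℤ) - u) ?_]
          · ring
          · by_contra hcon
            exact hu' (u - p) (by omega) (by omega)
      · rw [ho, mul_zero]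
    · intro i hi
      rw [Finset.mem_range] at hi
      rw [if_pos (by omega), ifz_of_eq n _ i (by omega), ifz_of_eq n _ (m + 1 - i) (by omega),
        pow_add]
      obtain ⟨w, hw⟩ : ∃ w, N = p + i + w := ⟨N - p - i, by omega⟩
      have e1 : R n x0 (N - p + 1 + (N - (p + i))) = R n x0 (N - p + 1) *
          R n (ρ - N - p + 1) (N - (p + i)) := by
        rw [R_add]; congr 2
        rw [hx0, Nat.cast_add, Nat.cast_sub hp]; push_cast; ring
      have e2 : R n x0 (2 * N + 2 - (p + m + 1) - (p + i) + m) =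
          R n x0 (2 * N + 2 - (p + m + 1) - (p + i)) *
            R n (ρ - (p + m + 1 : ℕ) - p + 2 - i) m := by
        rw [R_add]; congr 2
        rw [hx0, Nat.sub_sub, Nat.cast_sub (by omega)]; push_cast; ring
      have e3 : R n x0 (2 * N + 2 - (p + m + 1) - (p + i) + (p + i)) =
          R n x0 (2 * N + 2 - (p + m + 1) - (p + i)) *
            R n (ρ - (p + m + 1 : ℕ) - (p + i : ℕ) + 2) (p + i) := by
        rw [R_add]; congr 2
        rw [hx0, Nat.sub_sub, Nat.cast_sub (by omega)]; push_cast; ring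
      rw [show 2 * N + 2 - (p + m + 1) - (p + i) + m = N - p + 1 + (N - (p + i)) by omega, e1] at e2
      rw [show 2 * N + 2 - (p + m + 1) - (p + i) + (p + i) = 2 * N + 2 - (p + m + 1) by omega] at e3
      rw [e3]
      linear_combination (-(-1) ^ p * (-1) ^ i * (qfac n i)⁻¹ * (qfac n (m + 1 - i))⁻¹ *
        R n (ρ - (p + m + 1 : ℕ) - (p + i : ℕ) + 2) (p + i)) * e2
  · subst h
    rw [if_pos rfl, Finset.sum_eq_single p]
    · rw [if_pos (by omega), sub_self, show (0 : ℤ) = ((0 : ℕ) : ℤ) by rfl, ifz_nat, qfac_zero,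
        show ρ - p - p + 2 = ρ - 2 * p + 2 by ring]
      ring
    · intro u _ hne
      split_ifs with hc
      · rcases lt_or_ge u p with h1 | h1
        · rw [ifz_neg n ((u : ℤ) - p) (by omega)]; ring
        · rw [ifz_neg n ((p : ℤ) - u) (by omega)]; ring
      · rfl
    · intro hh
      exact absurd (Finset.mem_range.2 (by omega)) hh
  · rw [if_neg (by omega)]
    refine Finset.sum_eq_zero fun u _ => ?_
    split_ifs with hc
    · rcases lt_or_ge u p with h1 | h1
      · rw [ifz_neg n ((u : ℤ) - p) (by omega)]; ring
      · rw [ifz_neg n ((r : ℤ) - u) (by omega)]; ring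
    · rfl

/-! ### The separated form of the tetrahedral symbol -/

lemma Fa_swap (n : ℕ) (D : ℂ) (q j z t : ℕ) (h : q + t = j + z) (hz : z ≤ q) :
    Fa n D q * R n (D - j + 1) t = Fa n D j * R n (D - q + 1) z := by
  obtain ⟨r, rfl⟩ : ∃ r, q = r + z := ⟨q - z, by omega⟩
  obtain rfl : j = r + t := by omega
  rw [Fa_add, Fa_add, Fa_eq n (D - r) z, Fa_eq n (D - r) t]
  rw [show D - r - z + 1 = D - ((r + z : ℕ) : ℂ) + 1 by push_cast; ring,
    show D - r - t + 1 = D - ((r + t : ℕ) : ℂ) + 1 by push_cast; ring]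
  ring

/-- the separated summand -/
def sep (n : ℕ) (a b d : ℂ) (N p k u : ℕ) : ℂ :=
  (-1) ^ (u + p) * qfac n u * Fa n (2 * a) u * (Fa n (2 * d) (N - u))⁻¹ * (qfac n (N - u))⁻¹ *
    (R n (2 * a + 2 * b - N - p + 1) (N - u) * ifz n ((u : ℤ) - p)) *
    (R n (2 * b + 2 * d - 2 * N + 2 + k + u) (N - u) * ifz n ((u : ℤ) - k))

lemma inner_eq (n : ℕ) (hn : 2 ≤ n) (a b c d e f : ℂ) (p q j k N : ℕ)
    (ha : NotInt (2 * a)) (hc : NotInt (2 * c)) (hd : NotInt (2 * d))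
    (hpq : N = p + q) (hjk : N = j + k) (hp : p < n) (hq : q < n) (hj : j < n) (hk : k < n)
    (he : e = a + b - p) (hcc : c = a + b + d - N) (hf : f = b + d - j) :
    ∑ z ∈ Finset.Icc (q - j) (min q k),
      (-1 : ℂ) ^ z * qbin n (a + f + c + 1) (2 * c + (z : ℂ) + 1) *
      qbin n ((a + c - f) + (z : ℂ)) (a + c - f) *
      qbin n ((b + f - d) + (d + e - c) - (z : ℂ)) (b + f - d) *
      qbin n ((d + c - e) + (z : ℂ)) (d + f - b) =
    R n (2 * c + 2) k * (R n (2 * c + 2) q)⁻¹ * Fa n (2 * d) j * (qfac n k)⁻¹ * (qfac n p)⁻¹ *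
      (Fa n (2 * a) p)⁻¹ * ∑ u ∈ Finset.range (N + 1), sep n a b d N p k u := by
  have hNc : (N : ℂ) = p + q := by exact_mod_cast hpq
  have hNc' : (N : ℂ) = j + k := by exact_mod_cast hjk
  have hkC : (k : ℂ) = p + q - j := by rw [← hNc, hNc']; ring
  have hs := sears n hn (2 * a) (2 * b) (2 * d) (2 * c) p q j k (by omega) hq hj hk
    (by rw [hcc, hNc]; ring)
  have nc : NotInt (2 * c + 2) := hc.of_eq 2 (by push_cast; ring)
  have ncq := R_ne hn nc q
  have ndq := Fa_ne hn hd q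
  have fk := qfac_ne n hn k hk
  have fp := qfac_ne n hn p hp
  have nap := Fa_ne hn ha p
  trans R n (2 * c + 2) k * (R n (2 * c + 2) q)⁻¹ * Fa n (2 * d) j * (Fa n (2 * d) q)⁻¹ *
    ∑ z ∈ Finset.range (q + 1), (-1) ^ z * ifz n ((k : ℤ) - z) * R n (2 * a - k + 1) z *
      (qfac n z)⁻¹ * ifz n ((p : ℤ) - k + z) *
        (R n (2 * b - j + 1) (q - z) * (qfac n (q - z))⁻¹ * R n (2 * d - q + 1) z *
          R n (2 * c + 2 + z) (q - z))
  · rw [Finset.mul_sum]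
    have hsub : Finset.Icc (q - j) (min q k) ⊆ Finset.range (q + 1) := by
      intro z hz
      rw [Finset.mem_Icc] at hz
      rw [Finset.mem_range]
      omega
    rw [← Finset.sum_subset hsub]
    · refine Finset.sum_congr rfl fun z hz => ?_
      rw [Finset.mem_Icc] at hz
      have hzk : z ≤ k := by omega
      have hzq : z ≤ q := by omega
      obtain ⟨t, ht⟩ : ∃ t, q + t = j + z := ⟨j + z - q, by omega⟩
      have htC : (q : ℂ) + t = j + z := by exact_mod_cast ht
      rw [qbin_eq n (a + f + c + 1) _ (k - z) (by omega)
          (by rw [Nat.cast_sub hzk, hkC, hf, hcc, hNc]; ring),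
        qbin_eq n (a + c - f + z) _ z (by omega) (by ring),
        qbin_eq n (b + f - d + (d + e - c) - z) _ (q - z) (by omega)
          (by rw [Nat.cast_sub hzq, he, hcc, hNc]; ring),
        qbin_eq n (d + c - e + z) _ t (by omega)
          (by rw [he, hcc, hf, hNc]; linear_combination -htC),
        ifz_of_eq n _ (k - z) (by omega), ifz_of_eq n ((p : ℤ) - k + z) t (by omega)]
      rw [show a + c - f + 1 = 2 * a - k + 1 by rw [hcc, hf, hkC, hNc]; ring,
        show b + f - d + 1 = 2 * b - j + 1 by rw [hf]; ring,
        show d + f - b + 1 = 2 * d - j + 1 by rw [hf]; ring,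
        show 2 * c + z + 1 + 1 = 2 * c + 2 + z by ring]
      have e1 : R n (2 * c + 2) k = R n (2 * c + 2) z * R n (2 * c + 2 + z) (k - z) := by
        rw [← R_add]; congr 1; omega
      have e2 : R n (2 * c + 2) q = R n (2 * c + 2) z * R n (2 * c + 2 + z) (q - z) := by
        rw [← R_add]; congr 1; omega
      have e3 := Fa_swap n (2 * d) q j z t ht hzq
      have e4 : R n (2 * d - j + 1) t = Fa n (2 * d) j * (Fa n (2 * d) q)⁻¹ *
          R n (2 * d - q + 1) z := by
        apply mul_left_cancel₀ ndq
        rw [e3]; field_simp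
      have nz := R_ne hn nc z
      have nzq := R_ne hn (nc.of_eq (y := 2 * c + 2 + z) z (by push_cast; ring)) (q - z)
      have e5 : R n (2 * c + 2 + z) (k - z) = R n (2 * c + 2) k * (R n (2 * c + 2) q)⁻¹ *
          R n (2 * c + 2 + z) (q - z) := by
        rw [e1, e2, mul_inv]
        generalize R n (2 * c + 2) z = X at nz ⊢
        generalize R n (2 * c + 2 + z) (q - z) = Y at nzq ⊢
        generalize R n (2 * c + 2 + z) (k - z) = W
        field_simp
      rw [e4, e5]
      ring
    · intro z hz hz'
      rw [Finset.mem_range] at hz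
      rw [Finset.mem_Icc] at hz'
      rcases le_or_gt z k with h1 | h1
      · rw [ifz_neg n ((p : ℤ) - k + z) (by omega)]; ring
      · rw [ifz_neg n ((k : ℤ) - z) (by omega)]; ring
  · have hs' := hs
    rw [mul_comm, ← eq_mul_inv_iff_mul_eq₀ fk] at hs'
    rw [hs']
    have hs3 : (∑ u ∈ Finset.range (N + 1), sep n a b d N p k u) =
        qfac n p * Fa n (2 * a) p * (Fa n (2 * d) q)⁻¹ *
        ∑ y ∈ Finset.range (q + 1), R n (p - 2 * a) y * R n (p + 1) y * R n (2 * d - q + 1) y *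
      R n (2 * b + 2 * d - 2 * (p + q) + 2 + k + p + y) (q - y) *
      R n (2 * a + 2 * b - (p + q) - p + 1) (q - y) * (qfac n y)⁻¹ * ifz n ((p : ℤ) - k + y) *
      (qfac n (q - y))⁻¹ := by
      rw [show N + 1 = p + (q + 1) by omega, Finset.sum_range_add]
      rw [Finset.sum_eq_zero, zero_add, Finset.mul_sum]
      · refine Finset.sum_congr rfl fun y hy => ?_
        rw [Finset.mem_range] at hy
        unfold sep
        rw [show N - (p + y) = q - y by omega, hNc, ifz_of_eq n _ y (by omega),
          show ((p + y : ℕ) : ℤ) - k = p - k + y by push_cast; ring,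
          show (p : ℂ) - 2 * a = -(2 * a - p) by ring, Fa_neg, Fa_add, qfac_add,
          show p + y + p = y + 2 * p by ring, pow_add, pow_mul, neg_one_sq, one_pow]
        have e1 := Fa_swap n (2 * d) q (q - y) y 0 (by omega) (by omega)
        rw [R_zero, mul_one] at e1
        have n1 := Fa_ne hn hd (q - y)
        rw [e1] at ndq ⊢
        have n2 := right_ne_zero_of_mul ndq
        rw [show 2 * b + 2 * d - 2 * ((p : ℂ) + q) + 2 + k + ((p + y : ℕ) : ℂ) =
          2 * b + 2 * d - 2 * (p + q) + 2 + k + p + y by push_cast; ring]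
        rw [mul_inv]
        generalize hX : R n (2 * d - q + 1) y = X at n2 ⊢
        have hXX : X⁻¹ * X = 1 := inv_mul_cancel₀ n2
        linear_combination (-(qfac n p * Fa n (2 * a) p * (Fa n (2 * d) (q - y))⁻¹ *
          ((-1) ^ y * Fa n (2 * a - p) y) * R n (p + 1) y *
          R n (2 * b + 2 * d - 2 * (p + q) + 2 + k + p + y) (q - y) *
          R n (2 * a + 2 * b - (p + q) - p + 1) (q - y) * (qfac n y)⁻¹ *
          ifz n ((p : ℤ) - k + y) * (qfac n (q - y))⁻¹)) * hXX
      · intro u hu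
        rw [Finset.mem_range] at hu
        unfold sep
        rw [ifz_neg n ((u : ℤ) - p) (by omega)]
        ring
    rw [hs3]
    field_simp

lemma sixjtet_eq (n : ℕ) (hn : 2 ≤ n) (a b c d e f : ℂ) (p q j k N : ℕ)
    (ha : NotInt (2 * a)) (hc : NotInt (2 * c)) (hd : NotInt (2 * d)) (hf2 : NotInt (2 * f))
    (hpq : N = p + q) (hjk : N = j + k) (hp : p < n) (hq : q < n) (hj : j < n) (hk : k < n)
    (he : e = a + b - p) (hcc : c = a + b + d - N) (hf : f = b + d - j) :
    sixjtet n a b e d c f =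
      (-1) ^ (n - 1 + k) * (qfac n q * qfac n p * (qfac n j)⁻¹ * (qfac n k)⁻¹) *
      (Fa n (2 * e) (n - 1 - p) * (qfac n (n - 1 - p))⁻¹) *
      (Fa n (2 * e) q * (qfac n q)⁻¹)⁻¹ *
      (R n (2 * c + 2) k * (R n (2 * c + 2) q)⁻¹ * Fa n (2 * d) j * (qfac n k)⁻¹ * (qfac n p)⁻¹ *
      (Fa n (2 * a) p)⁻¹ * ∑ u ∈ Finset.range (N + 1), sep n a b d N p k u) := by
  have hNc : (N : ℂ) = p + q := by exact_mod_cast hpq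
  have hNc' : (N : ℂ) = j + k := by exact_mod_cast hjk
  have hn1 : ((n - 1 : ℕ) : ℂ) = n - 1 := by rw [Nat.cast_sub (by omega)]; simp
  unfold sixjtet sixj
  rw [natIdx_eq (a + f - c) k (by rw [hf, hcc, hNc']; ring),
    natIdx_eq (d + e - c) q (by rw [he, hcc, hNc]; ring),
    natIdx_eq (a + b - e) p (by rw [he]; ring),
    natIdx_eq (b + d - f) j (by rw [hf]; ring),
    inner_eq n hn a b c d e f p q j k N ha hc hd hpq hjk hp hq hj hk he hcc hf]
  have hb : qbin n (2 * f + n) (2 * f + 1) ≠ 0 := by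
    rw [qbin_eq n _ _ (n - 1) (by omega) (by rw [hn1]; ring)]
    exact mul_ne_zero (R_ne hn (hf2.of_eq 2 (by push_cast; ring)) _)
      (inv_ne_zero (qfac_ne n hn _ (by omega)))
  have h1 : qbin n (2 * e) (a + b + e + 1 - n) =
      Fa n (2 * e) (n - 1 - p) * (qfac n (n - 1 - p))⁻¹ := by
    rw [qbin_eq n _ _ (n - 1 - p) (by omega) (by rw [Nat.cast_sub (by omega), hn1, he]; ring),
      Fa_eq, Nat.cast_sub (by omega), hn1]
    congr 2; rw [he]; ring
  have h2 : qbin n (2 * e) (e + c - d) = Fa n (2 * e) q * (qfac n q)⁻¹ := by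
    rw [qbin_eq n _ _ q (by omega) (by rw [he, hcc, hNc]; ring), Fa_eq]
    congr 2; rw [he, hcc, hNc]; ring
  rw [h1, h2]
  generalize qbin n (2 * f + n) (2 * f + 1) = Q at hb ⊢
  have hQ : Q⁻¹ * Q = 1 := inv_mul_cancel₀ hb
  rw [div_eq_mul_inv, mul_inv (qfac n j)]
  generalize (Fa n (2 * e) q * (qfac n q)⁻¹)⁻¹ = Y
  generalize (R n (2 * c + 2) k * (R n (2 * c + 2) q)⁻¹ * Fa n (2 * d) j * (qfac n k)⁻¹ *
    (qfac n p)⁻¹ * (Fa n (2 * a) p)⁻¹ * ∑ u ∈ Finset.range (N + 1), sep n a b d N p k u) = Z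
  linear_combination ((-1) ^ (n - 1 + k) * (qfac n q * qfac n p * (qfac n j)⁻¹ * (qfac n k)⁻¹) *
      (Fa n (2 * e) (n - 1 - p) * (qfac n (n - 1 - p))⁻¹) * Y * Z) * hQ

/-! ### Final assembly -/

lemma sign_congr (x y : ℕ) (h : x % 2 = y % 2) : (-1 : ℂ) ^ x = (-1) ^ y := by
  rw [neg_one_pow_eq_pow_mod_two, h, ← neg_one_pow_eq_pow_mod_two]

lemma cfac (n : ℕ) (hn : 2 ≤ n) (x : ℂ) (hx : NotInt x) (j k : ℕ) (hj : j < n) :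
    Fa n x (n - 1 - j) * (R n (x + 2) (n - 1))⁻¹ * (Fa n x k)⁻¹ =
      (-1) ^ (n - 1 - j) * qn n (x + 1) * (R n (x - k + 1) (j + k + 1))⁻¹ := by
  obtain ⟨m, hm⟩ : ∃ m, n = m + j + 1 := ⟨n - 1 - j, by omega⟩
  have hmC : (n : ℂ) = m + j + 1 := by exact_mod_cast hm
  have e0 : n - 1 - j = m := by omega
  have e1 : Fa n x m * R n (x + 1) (j + 1) = R n (x - m + 1) n := by
    rw [Fa_eq]
    have := R_add n (x - m + 1) m (j + 1)
    rw [show m + (j + 1) = n by omega, show x - m + 1 + m = x + 1 by ring] at this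
    exact this.symm
  have e2 : R n (x + 1) n = qn n (x + 1) * R n (x + 2) (n - 1) := by
    have := R_add n (x + 1) 1 (n - 1)
    rw [show 1 + (n - 1) = n by omega, R_one, Nat.cast_one,
      show x + 1 + 1 = x + 2 by ring] at this
    exact this
  have e3 := R_shift_nat n hn (x - m + 1) m
  rw [show x - m + 1 + m = x + 1 by ring] at e3
  have e4 : Fa n x k * R n (x + 1) (j + 1) = R n (x - k + 1) (j + k + 1) := by
    rw [Fa_eq]
    have := R_add n (x - k + 1) k (j + 1)
    rw [show k + (j + 1) = j + k + 1 by omega, show x - k + 1 + k = x + 1 by ring] at this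
    exact this.symm
  have n1 := R_ne hn (hx.of_eq (y := x + 2) 2 (by push_cast; ring)) (n - 1)
  have n2 := Fa_ne hn hx k
  have n3 := R_ne hn (hx.of_eq (y := x + 1) 1 (by push_cast; ring)) (j + 1)
  rw [e0, ← e4]
  rw [e2, ← e1] at e3
  have hs : ((-1 : ℂ) ^ m) * (-1) ^ m = 1 := by rw [← mul_pow]; simp
  generalize Fa n x m = A at *
  generalize R n (x + 2) (n - 1) = B at *
  generalize R n (x + 1) (j + 1) = C at *
  generalize Fa n x k = D at *
  generalize qn n (x + 1) = E at *
  generalize ((-1 : ℂ) ^ m) = s at *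
  field_simp
  linear_combination (-s) * e3 - A * C * hs

/-- The constant in front. -/
def kc (n : ℕ) (a c e g : ℂ) (p q p' q' : ℕ) : ℂ :=
  (qfac n q * qfac n p * (qfac n p')⁻¹ * (qfac n q')⁻¹) *
  (Fa n (2 * e) (n - 1 - p) * (qfac n (n - 1 - p))⁻¹) * (qfac n q * (Fa n (2 * e) q)⁻¹) *
  (R n (2 * c + 2) q' * (R n (2 * c + 2) q)⁻¹) *
  (Fa n (2 * a) p' * (Fa n (2 * a) p)⁻¹ * (qfac n p)⁻¹ * (qfac n q')⁻¹) *
  (qfac n (n - 1) * (R n (2 * g + 2) (n - 1))⁻¹)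

/-- The coefficient of the inner sum. -/
def tc (n : ℕ) (a d ρ : ℂ) (N p p' q' u v : ℕ) : ℂ :=
  (-1) ^ (q' + (n - 1) + p + N + u + v) *
  (qfac n u * Fa n (2 * a) u * (Fa n (2 * d) (N - u))⁻¹ * (qfac n (N - u))⁻¹) *
  (qfac n (N - v) * Fa n (2 * d) (N - v) * (Fa n (2 * a) v)⁻¹ * (qfac n v)⁻¹) *
  (R n (ρ - N - p + 1) (N - u) * ifz n ((u : ℤ) - p)) *
  (R n (ρ - p' - v + 2) v * ifz n ((p' : ℤ) - v))

/-- The summand of the inner orthogonality sum. -/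
def bs (n : ℕ) (τ : ℂ) (k u v : ℕ) : ℂ :=
  (-1) ^ k * qn n (τ + 2 * (k : ℂ)) * ifz n ((u : ℤ) - k) * ifz n ((k : ℤ) - v) *
    R n (τ + (k : ℂ)) v * (R n (τ + (k : ℂ)) (u + 1))⁻¹

lemma qbin_top (n : ℕ) (hn : 2 ≤ n) (x : ℂ) :
    qbin n (2 * x + n) (2 * x + 1) = R n (2 * x + 2) (n - 1) * (qfac n (n - 1))⁻¹ := by
  have hn1 : ((n - 1 : ℕ) : ℂ) = n - 1 := by rw [Nat.cast_sub (by omega)]; simp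
  rw [qbin_eq n _ _ (n - 1) (by omega) (by rw [hn1]; ring)]
  congr 2; ring

lemma term_eq (n : ℕ) (hn : 2 ≤ n) (a b c d e f g : ℂ) (p q p' q' j k N : ℕ)
    (ha : NotInt (2 * a)) (hc : NotInt (2 * c)) (hd : NotInt (2 * d)) (hf2 : NotInt (2 * f))
    (hg2 : NotInt (2 * g))
    (hpq : N = p + q) (hpq' : N = p' + q') (hjk : N = j + k) (hp : p < n) (hq : q < n)
    (hp' : p' < n) (hq' : q' < n) (hj : j < n) (hk : k < n)
    (he : e = a + b - p) (hg : g = a + b - p') (hcc : c = a + b + d - N) (hf : f = b + d - j) :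
    (qbin n (2 * f + n) (2 * f + 1))⁻¹ * (qbin n (2 * g + n) (2 * g + 1))⁻¹ *
      sixjtet n a b e d c f * sixjtet n d b f a c g =
    kc n a c e g p q p' q' * (((-1) ^ (n - 1 + k) * (-1) ^ (n - 1 + q') * (-1) ^ (n - 1 - j) *
      qn n (2 * f + 1) * (R n (2 * f - k + 1) (j + k + 1))⁻¹) *
      ((∑ u ∈ Finset.range (N + 1), sep n a b d N p k u) *
       (∑ u ∈ Finset.range (N + 1), sep n d b a N j q' u))) := by
  rw [sixjtet_eq n hn a b c d e f p q j k N ha hc hd hf2 hpq hjk hp hq hj hk he hcc hf,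
    sixjtet_eq n hn d b c a f g j k p' q' N hd hc ha hg2 hjk hpq' hj hk hp' hq'
      (by rw [hf]; ring) (by rw [hcc]; ring) (by rw [hg]; ring), qbin_top n hn, qbin_top n hn]
  have hcf := cfac n hn (2 * f) hf2 j k hj
  have hcm := qfac_compl n hn j hj
  have m1 := qfac_ne n hn j hj
  have m2 := qfac_ne n hn k hk
  have m3 := qfac_ne n hn (n - 1 - j) (by omega)
  have m4 := Fa_ne hn hd j
  have m5 := R_ne hn (hc.of_eq (y := 2 * c + 2) 2 (by push_cast; ring)) k
  unfold kc
  rw [← hcm] at *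
  have hcf' : (-1 : ℂ) ^ (n - 1 + k) * (-1) ^ (n - 1 + q') * (-1) ^ (n - 1 - j) *
      qn n (2 * f + 1) * (R n (2 * f - k + 1) (j + k + 1))⁻¹ =
      (-1 : ℂ) ^ (n - 1 + k) * (-1) ^ (n - 1 + q') *
      (Fa n (2 * f) (n - 1 - j) * (R n (2 * f + 2) (n - 1))⁻¹ * (Fa n (2 * f) k)⁻¹) := by
    rw [hcf]; ring
  rw [hcf']
  generalize (∑ u ∈ Finset.range (N + 1), sep n a b d N p k u) = S1
  generalize (∑ u ∈ Finset.range (N + 1), sep n d b a N j q' u) = S2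
  generalize qfac n (n - 1 - j) = X1 at *
  generalize qfac n j = X2 at *
  generalize qfac n k = X3 at *
  generalize Fa n (2 * d) j = X4 at *
  generalize R n (2 * c + 2) k = X5 at *
  simp only [mul_inv, inv_inv]
  have i1 : X1 * X1⁻¹ = 1 := mul_inv_cancel₀ m3
  have i2 : X2 * X2⁻¹ = 1 := mul_inv_cancel₀ m1
  have i3 : X3 * X3⁻¹ = 1 := mul_inv_cancel₀ m2
  have i4 : X4 * X4⁻¹ = 1 := mul_inv_cancel₀ m4
  have i5 : X5 * X5⁻¹ = 1 := mul_inv_cancel₀ m5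
  generalize (-1 : ℂ) ^ (n - 1 + k) = s1
  generalize (-1 : ℂ) ^ (n - 1 + q') = s2
  generalize qfac n q = Y1
  generalize (qfac n p)⁻¹ = Y2i
  generalize qfac n p = Y2
  generalize (qfac n p')⁻¹ = Y3
  generalize (qfac n q')⁻¹ = Y4
  generalize Fa n (2 * e) (n - 1 - p) = Y5
  generalize (qfac n (n - 1 - p))⁻¹ = Y6
  generalize (Fa n (2 * e) q)⁻¹ = Y7
  generalize R n (2 * c + 2) q' = Y8
  generalize (R n (2 * c + 2) q)⁻¹ = Y9
  generalize Fa n (2 * a) p' = Z1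
  generalize (Fa n (2 * a) p)⁻¹ = Z2
  generalize (R n (2 * g + 2) (n - 1))⁻¹ = Z3
  generalize (R n (2 * f + 2) (n - 1))⁻¹ = Z4
  generalize Fa n (2 * f) (n - 1 - j) = Z5
  generalize (Fa n (2 * f) k)⁻¹ = Z6
  trans (X2 * X2⁻¹) * (X3 * X3⁻¹) * (X3 * X3⁻¹) * (X4 * X4⁻¹) * (X5 * X5⁻¹) *
    (s1 * s2 * X1 * X2 * X1⁻¹ * X2⁻¹ * Z4 * Z5 * Z6 * X1 * X2 * Z3 *
      Y1 * Y2 * Y3 * Y4 * Y5 * Y6 * Y7 * Y1 * Y8 * Y9 * Z1 * Z2 * Y2i * Y4 * S1 * S2)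
  · ring
  · rw [i2, i3, i4, i5]
    trans (X1 * X1⁻¹) * (X2 * X2⁻¹) * (s1 * s2 * Z4 * Z5 * Z6 * X1 * X2 * Z3 *
      Y1 * Y2 * Y3 * Y4 * Y5 * Y6 * Y7 * Y1 * Y8 * Y9 * Z1 * Z2 * Y2i * Y4 * S1 * S2)
    · ring
    · rw [i1, i2]; ring

lemma sep_prod (n : ℕ) (hn : 2 ≤ n) (a b d f : ℂ) (p p' q' j k N u v : ℕ)
    (hf2 : NotInt (2 * f))
    (hpq' : N = p' + q') (hjk : N = j + k) (hj : j < n)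
    (hf : f = b + d - j) (hu : u ≤ N) (hv : v ≤ N) :
    ((-1) ^ (n - 1 + k) * (-1) ^ (n - 1 + q') * (-1) ^ (n - 1 - j) *
      qn n (2 * f + 1) * (R n (2 * f - k + 1) (j + k + 1))⁻¹) *
      (sep n a b d N p k u * sep n d b a N j q' (N - v)) =
    tc n a d (2 * a + 2 * b) N p p' q' u v * bs n (2 * b + 2 * d - 2 * N + 1) k u v := by
  have hNc : (N : ℂ) = p' + q' := by exact_mod_cast hpq'
  have hNc' : (N : ℂ) = j + k := by exact_mod_cast hjk
  have hvC : ((N - v : ℕ) : ℂ) = N - v := by rw [Nat.cast_sub hv]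
  have hvZ : ((N - v : ℕ) : ℤ) = N - v := by rw [Nat.cast_sub hv]
  have hNz : (N : ℤ) = j + k := by exact_mod_cast hjk
  have hNz' : (N : ℤ) = p' + q' := by exact_mod_cast hpq'
  unfold sep tc bs
  rw [show N - (N - v) = v by omega, hvC, hvZ,
    show (N : ℤ) - v - j = k - v by rw [hNz]; ring,
    show (N : ℤ) - v - q' = p' - v by rw [hNz']; ring,
    show 2 * d + 2 * b - N - j + 1 = 2 * b + 2 * d - 2 * N + 1 + k by rw [hNc']; ring,
    show 2 * b + 2 * a - 2 * (N : ℂ) + 2 + q' + (N - v) = 2 * a + 2 * b - p' - v + 2 by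
      rw [hNc]; ring,
    show 2 * f + 1 = 2 * b + 2 * d - 2 * N + 1 + 2 * k by rw [hf, hNc']; ring,
    show 2 * f - k + 1 = 2 * b + 2 * d - 2 * N + 1 + k by rw [hf, hNc']; ring]
  have hτ : NotInt (2 * b + 2 * d - 2 * N + 1 + k) :=
    hf2.of_eq (1 - (k : ℤ)) (by rw [hf, hNc']; push_cast; ring)
  have hτ' : NotInt (2 * b + 2 * d - 2 * N + 2 + k + u) :=
    hτ.of_eq (1 + (u : ℤ)) (by push_cast; ring)
  have e1 : R n (2 * b + 2 * d - 2 * N + 1 + k) (j + k + 1) =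
      R n (2 * b + 2 * d - 2 * N + 1 + k) (u + 1) *
      R n (2 * b + 2 * d - 2 * N + 2 + k + u) (N - u) := by
    rw [show j + k + 1 = (u + 1) + (N - u) by omega, R_add]
    congr 2; push_cast; ring
  have n1 := R_ne hn hτ (u + 1)
  have n2 := R_ne hn hτ' (N - u)
  rw [e1]
  have hs : (-1 : ℂ) ^ (n - 1 + k) * (-1) ^ (n - 1 + q') * (-1) ^ (n - 1 - j) * (-1) ^ (u + p) *
      (-1) ^ (N - v + j) = (-1) ^ (q' + (n - 1) + p + N + u + v) * (-1) ^ k := by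
    simp only [← pow_add]
    apply sign_congr
    omega
  generalize (-1 : ℂ) ^ (n - 1 + k) = s1 at *
  generalize (-1 : ℂ) ^ (n - 1 + q') = s2 at *
  generalize (-1 : ℂ) ^ (n - 1 - j) = s3 at *
  generalize (-1 : ℂ) ^ (u + p) = s4 at *
  generalize (-1 : ℂ) ^ (N - v + j) = s5 at *
  generalize (-1 : ℂ) ^ (q' + (n - 1) + p + N + u + v) = s6 at *
  generalize (-1 : ℂ) ^ k = s7 at *
  rw [mul_inv]
  generalize (R n (2 * b + 2 * d - 2 * N + 1 + k) (u + 1))⁻¹ = Y1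
  generalize R n (2 * b + 2 * d - 2 * N + 2 + k + u) (N - u) = X1 at n2 ⊢
  have i1 : X1⁻¹ * X1 = 1 := inv_mul_cancel₀ n2
  generalize R n (2 * b + 2 * d - 2 * N + 1 + k) v = Y2
  generalize qn n (2 * b + 2 * d - 2 * N + 1 + 2 * k) = Y3
  generalize qfac n u = Y4
  generalize Fa n (2 * a) u = Y5
  generalize (Fa n (2 * d) (N - u))⁻¹ = Y6
  generalize (qfac n (N - u))⁻¹ = Y7
  generalize R n (2 * a + 2 * b - N - p + 1) (N - u) = Y8
  generalize ifz n ((u : ℤ) - p) = Y9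
  generalize ifz n ((u : ℤ) - k) = Z1
  generalize qfac n (N - v) = Z2
  generalize Fa n (2 * d) (N - v) = Z3
  generalize (Fa n (2 * a) v)⁻¹ = Z4
  generalize (qfac n v)⁻¹ = Z5
  generalize ifz n ((k : ℤ) - v) = Z6
  generalize R n (2 * a + 2 * b - p' - v + 2) v = Z7
  generalize ifz n ((p' : ℤ) - v) = Z8
  have : s1 * s2 * s3 * Y3 * (Y1 * X1⁻¹) * (s4 * Y4 * Y5 * Y6 * Y7 * (Y8 * Y9) * (X1 * Z1) *
      (s5 * Z2 * Z3 * Z4 * Z5 * (Y2 * Z6) * (Z7 * Z8))) =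
      (s1 * s2 * s3 * s4 * s5) * (X1⁻¹ * X1) * (Y3 * Y1 * (Y4 * Y5 * Y6 * Y7 * (Y8 * Y9) * Z1 *
      (Z2 * Z3 * Z4 * Z5 * (Y2 * Z6) * (Z7 * Z8)))) := by ring
  rw [this, hs, i1]
  ring

lemma NotHalfInt.two {x : ℂ} (h : NotHalfInt x) : NotInt (2 * x) := by
  intro m hm
  apply h m
  first | exact hm | linear_combination hm / 2

lemma main_sum (n : ℕ) (hn : 2 ≤ n) (a b d : ℂ) (p q p' q' N : ℕ)
    (ha : NotInt (2 * a)) (hd : NotInt (2 * d))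
    (hτ : NotInt (2 * b + 2 * d - 2 * N + 1)) (hρ : NotInt (2 * a + 2 * b))
    (hpq : N = p + q) (hpq' : N = p' + q') (hp : p < n) (hq : q < n)
    (hp' : p' < n) (hq' : q' < n) :
    ∑ j ∈ Finset.range n, (if j ≤ N ∧ N - j < n then
      ∑ u ∈ Finset.range (N + 1), ∑ v ∈ Finset.range (N + 1),
        tc n a d (2 * a + 2 * b) N p p' q' u v *
          bs n (2 * b + 2 * d - 2 * N + 1) (N - j) u v else 0) =
    (-1) ^ (q' + (n - 1) + p + N) *
      (if p = p' then (-1) ^ p * R n (2 * a + 2 * b - N - p + 1) (N - p) *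
        R n (2 * a + 2 * b - 2 * p + 2) p else 0) := by
  have step1 : ∑ j ∈ Finset.range n, (if j ≤ N ∧ N - j < n then
      ∑ u ∈ Finset.range (N + 1), ∑ v ∈ Finset.range (N + 1),
        tc n a d (2 * a + 2 * b) N p p' q' u v *
          bs n (2 * b + 2 * d - 2 * N + 1) (N - j) u v else 0) =
      ∑ u ∈ Finset.range (N + 1), ∑ v ∈ Finset.range (N + 1),
        tc n a d (2 * a + 2 * b) N p p' q' u v * ∑ j ∈ Finset.range n,
        (if j ≤ N ∧ N - j < n then bs n (2 * b + 2 * d - 2 * N + 1) (N - j) u v else 0) := by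
    trans ∑ j ∈ Finset.range n, ∑ u ∈ Finset.range (N + 1), ∑ v ∈ Finset.range (N + 1),
        tc n a d (2 * a + 2 * b) N p p' q' u v *
        (if j ≤ N ∧ N - j < n then bs n (2 * b + 2 * d - 2 * N + 1) (N - j) u v else 0)
    · refine Finset.sum_congr rfl fun j _ => ?_
      split_ifs
      · rfl
      · simp
    · rw [Finset.sum_comm]
      refine Finset.sum_congr rfl fun u _ => ?_
      rw [Finset.sum_comm]
      refine Finset.sum_congr rfl fun v _ => ?_
      rw [Finset.mul_sum]
  rw [step1, ← orthA' n hn (2 * a + 2 * b) hρ N p p' (by omega) (by omega) (by omega) hp',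
    Finset.mul_sum]
  refine Finset.sum_congr rfl fun u hu => ?_
  rw [Finset.mem_range] at hu
  rcases lt_or_ge u n with hun | hun
  swap
  · rw [if_neg (by omega), mul_zero]
    refine Finset.sum_eq_zero fun v _ => ?_
    unfold tc
    rw [qfac_ge n hn u hun]
    ring
  have step2 : ∀ v ∈ Finset.range (N + 1), tc n a d (2 * a + 2 * b) N p p' q' u v *
      ∑ j ∈ Finset.range n,
        (if j ≤ N ∧ N - j < n then bs n (2 * b + 2 * d - 2 * N + 1) (N - j) u v else 0) =
      tc n a d (2 * a + 2 * b) N p p' q' u v * (if u = v then (-1) ^ u else 0) := by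
    intro v hv
    rw [Finset.mem_range] at hv
    rcases lt_or_ge (N - v) n with h1 | h1
    · rw [← orthB' n hn _ hτ N u v (by omega) hun (by omega) h1]
      rfl
    · have : tc n a d (2 * a + 2 * b) N p p' q' u v = 0 := by
        unfold tc
        rw [qfac_ge n hn (N - v) h1]
        ring
      rw [this, zero_mul, zero_mul]
  rw [Finset.sum_congr rfl step2]
  simp only [mul_ite, mul_zero]
  rw [Finset.sum_ite_eq, if_pos (Finset.mem_range.2 hu)]
  rcases lt_or_ge (N - u) n with h1 | h1
  · rw [if_pos ⟨hun, h1⟩]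
    unfold tc
    have m1 := qfac_ne n hn u hun
    have m2 := qfac_ne n hn (N - u) h1
    have m3 := Fa_ne hn ha u
    have m4 := Fa_ne hn hd (N - u)
    rw [show (-1 : ℂ) ^ (q' + (n - 1) + p + N + u + u) = (-1) ^ (q' + (n - 1) + p + N) from
      sign_congr _ _ (by omega)]
    generalize R n (2 * a + 2 * b - N - p + 1) (N - u) = Y1
    generalize R n (2 * a + 2 * b - p' - u + 2) u = Y2
    generalize (-1 : ℂ) ^ (q' + (n - 1) + p + N) = s1
    generalize (-1 : ℂ) ^ u = s2
    generalize ifz n ((u : ℤ) - p) = Y3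
    generalize ifz n ((p' : ℤ) - u) = Y4
    generalize qfac n u = X1 at *
    generalize qfac n (N - u) = X2 at *
    generalize Fa n (2 * a) u = X3 at *
    generalize Fa n (2 * d) (N - u) = X4 at *
    field_simp
  · rw [if_neg (by omega)]
    unfold tc
    rw [qfac_ge n hn (N - u) h1]
    ring

lemma kc_diag (n : ℕ) (hn : 2 ≤ n) (a b c e : ℂ) (p q N : ℕ)
    (ha : NotInt (2 * a)) (hc : NotInt (2 * c)) (he2 : NotInt (2 * e))
    (hpq : N = p + q) (hp : p < n) (hq : q < n) (he : e = a + b - p) :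
    kc n a c e e p q p q * ((-1) ^ (q + (n - 1) + p + N) *
      ((-1) ^ p * R n (2 * a + 2 * b - N - p + 1) (N - p) *
        R n (2 * a + 2 * b - 2 * p + 2) p)) = 1 := by
  have hNc : (N : ℂ) = p + q := by exact_mod_cast hpq
  have hcf := cfac n hn (2 * e) he2 p q hp
  have hcm := qfac_compl n hn p hp
  have m1 := qfac_ne n hn p hp
  have m2 := qfac_ne n hn q hq
  have m3 := qfac_ne n hn (n - 1 - p) (by omega)
  have m4 := Fa_ne hn ha p
  have m5 := R_ne hn (hc.of_eq (y := 2 * c + 2) 2 (by push_cast; ring)) q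
  have hk : kc n a c e e p q p q = (-1) ^ (n - 1 - p) * qn n (2 * e + 1) *
      (R n (2 * e - q + 1) (p + q + 1))⁻¹ := by
    rw [← hcf]
    unfold kc
    rw [← hcm]
    generalize qfac n p = X1 at *
    generalize qfac n q = X2 at *
    generalize qfac n (n - 1 - p) = X3 at *
    generalize Fa n (2 * a) p = X4 at *
    generalize R n (2 * c + 2) q = X5 at *
    generalize (R n (2 * e + 2) (n - 1))⁻¹ = Y1
    generalize (Fa n (2 * e) q)⁻¹ = Y2
    generalize Fa n (2 * e) (n - 1 - p) = Y3
    field_simp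
  have hx : NotInt (2 * e - q + 1) := he2.of_eq (1 - (q : ℤ)) (by push_cast; ring)
  have e1 : R n (2 * e - q + 1) (p + q + 1) = R n (2 * e - q + 1) q *
      (qn n (2 * e + 1) * R n (2 * e + 2) p) := by
    rw [show p + q + 1 = q + (1 + p) by omega, R_add, R_add, R_one]
    rw [show 2 * e - q + 1 + q = 2 * e + 1 by ring, Nat.cast_one,
      show 2 * e + 1 + 1 = 2 * e + 2 by ring]
  have n1 := R_ne hn hx (p + q + 1)
  rw [hk, show N - p = q by omega,
    show 2 * a + 2 * b - N - p + 1 = 2 * e - q + 1 by rw [he, hNc]; ring,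
    show 2 * a + 2 * b - 2 * p + 2 = 2 * e + 2 by rw [he]; ring]
  have hs : (-1 : ℂ) ^ (n - 1 - p) * (-1) ^ (q + (n - 1) + p + N) * (-1) ^ p = 1 := by
    simp only [← pow_add]
    rw [← pow_zero (-1 : ℂ)]
    exact sign_congr _ _ (by omega)
  trans ((-1 : ℂ) ^ (n - 1 - p) * (-1) ^ (q + (n - 1) + p + N) * (-1) ^ p) *
    ((R n (2 * e - q + 1) (p + q + 1))⁻¹ * (R n (2 * e - q + 1) q *
      (qn n (2 * e + 1) * R n (2 * e + 2) p)))
  · ring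
  · rw [hs, ← e1, inv_mul_cancel₀ n1, one_mul]

open Classical in
theorem sixjtet_orthogonality (n : ℕ) (hn : 2 ≤ n) (a b c d e g : ℂ)
    (ha : NotHalfInt a) (hb : NotHalfInt b) (hc : NotHalfInt c) (hd : NotHalfInt d)
    (he : NotHalfInt e) (hg : NotHalfInt g) (hbd : NotHalfInt (b + d))
    (habe : InZn n (a + b - e)) (hdec : InZn n (d + e - c))
    (habg : InZn n (a + b - g)) (hdgc : InZn n (d + g - c)) :
    (∑ j ∈ Finset.range n,
        if InZn n (a + (b + d - (j : ℂ)) - c) then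
          (qbin n (2 * (b + d - (j : ℂ)) + (n : ℂ)) (2 * (b + d - (j : ℂ)) + 1))⁻¹ *
            (qbin n (2 * g + (n : ℂ)) (2 * g + 1))⁻¹ *
            sixjtet n a b e d c (b + d - (j : ℂ)) *
            sixjtet n d b (b + d - (j : ℂ)) a c g
        else 0)
      = if e = g then 1 else 0 := by

  obtain ⟨p, hp, hpe⟩ := habe
  obtain ⟨q, hq, hqe⟩ := hdec
  obtain ⟨p', hp', hpe'⟩ := habg
  obtain ⟨q', hq', hqe'⟩ := hdgc
  have he1 : e = a + b - p := by rw [← hpe]; ring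
  have hg1 : g = a + b - p' := by rw [← hpe']; ring
  have hNN : p + q = p' + q' := by
    have : ((p + q : ℕ) : ℂ) = ((p' + q' : ℕ) : ℂ) := by
      push_cast
      rw [← hpe, ← hqe, ← hpe', ← hqe']; ring
    exact_mod_cast this
  obtain ⟨N, hN⟩ : ∃ N, N = p + q := ⟨_, rfl⟩
  have hNc : (N : ℂ) = p + q := by exact_mod_cast hN
  have hc1 : c = a + b + d - N := by rw [hNc, ← hpe, ← hqe]; ring
  have hiff : ∀ j : ℕ, InZn n (a + (b + d - (j : ℂ)) - c) ↔ (j ≤ N ∧ N - j < n) := by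
    intro j
    have hx : a + (b + d - (j : ℂ)) - c = N - j := by rw [hc1]; ring
    rw [hx]
    constructor
    · rintro ⟨k, hk, hke⟩
      have : N = k + j := by
        have : (N : ℂ) = ((k + j : ℕ) : ℂ) := by push_cast; rw [← hke]; ring
        exact_mod_cast this
      omega
    · rintro ⟨h1, h2⟩
      exact ⟨N - j, h2, by rw [Nat.cast_sub h1]⟩
  have ha2 := ha.two
  have hc2 := hc.two
  have hd2 := hd.two
  have he2 := he.two
  have hg2 := hg.two
  have hbd2 := hbd.two
  have hτ : NotInt (2 * b + 2 * d - 2 * N + 1) :=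
    hbd2.of_eq (1 - 2 * (N : ℤ)) (by push_cast; ring)
  have hρ : NotInt (2 * a + 2 * b) := he2.of_eq (2 * (p : ℤ)) (by rw [he1]; push_cast; ring)
  have hsum := main_sum n hn a b d p q p' q' N ha2 hd2 hτ hρ hN (by omega) hp hq hp' hq'
  trans kc n a c e g p q p' q' * ((-1) ^ (q' + (n - 1) + p + N) *
      (if p = p' then (-1) ^ p * R n (2 * a + 2 * b - N - p + 1) (N - p) *
        R n (2 * a + 2 * b - 2 * p + 2) p else 0))
  · rw [← hsum, Finset.mul_sum]
    refine Finset.sum_congr rfl fun j hj => ?_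
    rw [Finset.mem_range] at hj
    by_cases hcond : j ≤ N ∧ N - j < n
    · rw [if_pos ((hiff j).2 hcond), if_pos hcond]
      have hf2 : NotInt (2 * (b + d - (j : ℂ))) :=
        hbd2.of_eq (-2 * (j : ℤ)) (by push_cast; ring)
      rw [term_eq n hn a b c d e (b + d - j) g p q p' q' j (N - j) N ha2 hc2 hd2 hf2 hg2 hN
        (by omega) (by omega) hp hq hp' hq' hj hcond.2 he1 hg1 hc1 rfl]
      congr 1
      rw [← Finset.sum_range_reflect (fun u => sep n d b a N j q' u), Finset.sum_mul_sum,
        Finset.mul_sum]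
      refine Finset.sum_congr rfl fun u hu => ?_
      rw [Finset.mul_sum]
      refine Finset.sum_congr rfl fun v hv => ?_
      rw [Finset.mem_range] at hu hv
      rw [show N + 1 - 1 - v = N - v by omega]
      exact sep_prod n hn a b d (b + d - j) p p' q' j (N - j) N u v hf2 (by omega) (by omega) hj
        rfl (by omega) (by omega)
    · rw [if_neg (fun h => hcond ((hiff j).1 h)), if_neg hcond, mul_zero]
  · by_cases hpp : p = p'
    · subst hpp
      obtain rfl : q = q' := by omega
      have heg : e = g := by rw [he1, hg1]
      subst heg
      rw [if_pos rfl, if_pos rfl]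
      exact kc_diag n hn a b c e p q N ha2 hc2 he2 hN hp hq he1
    · have heg : e ≠ g := by
        intro h
        apply hpp
        have : (p : ℂ) = p' := by rw [← hpe, ← hpe', h]
        exact_mod_cast this
      rw [if_neg hpp, if_neg heg, mul_zero, mul_zero]

end
end

section
/- Let 0 < a < π and let (a_n) be a sequence of integers with lim_{n→∞} 2πa_n/n = a (and 0 ≤ 2a_n ≤ n−1 for all n). Then lim_{n→∞} (π/n) · Σ_{k=1}^{2a_n} log(2 sin(kπ/n)) = ∫_0^a log|2 sin t| dt = −Λ(a). -/
open Complex Finset Filter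
open scoped Matrix Kronecker Real

noncomputable section

theorem aux_sum_eq_integral (g : ℝ → ℝ) (h : ℝ) (hh : 0 < h) (m : ℕ) :
    IntervalIntegrable (fun t => g (⌈t / h⌉₊ * h)) MeasureTheory.volume 0 (m * h) ∧
    ∫ t in (0:ℝ)..(m * h), g (⌈t / h⌉₊ * h) = h * ∑ k ∈ Finset.Icc 1 m, g (k * h) := by
  induction m with
  | zero => simp
  | succ m ih =>
    have hle : (m * h : ℝ) ≤ ((m + 1 : ℕ) : ℝ) * h := by
      push_cast; nlinarith
    have hc : Set.EqOn (fun _ : ℝ => g (((m + 1 : ℕ) : ℝ) * h)) (fun t => g (⌈t / h⌉₊ * h))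
        (Set.uIoc (m * h : ℝ) (((m + 1 : ℕ) : ℝ) * h)) := by
      intro t ht
      rw [Set.uIoc_of_le hle] at ht
      have : ⌈t / h⌉₊ = m + 1 := by
        rw [Nat.ceil_eq_iff (by omega)]
        simp only [Nat.add_sub_cancel]
        exact ⟨(lt_div_iff₀ hh).2 ht.1, (div_le_iff₀ hh).2 ht.2⟩
      simp only [this]
    have hi : IntervalIntegrable (fun t => g (⌈t / h⌉₊ * h)) MeasureTheory.volume
        (m * h) (((m + 1 : ℕ) : ℝ) * h) :=
      (intervalIntegrable_const (c := g (((m + 1 : ℕ) : ℝ) * h))).congr hc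
    refine ⟨ih.1.trans hi, ?_⟩
    rw [← intervalIntegral.integral_add_adjacent_intervals ih.1 hi, ih.2,
      Finset.sum_Icc_succ_top (by omega), mul_add]
    congr 1
    have : ∫ t in (m * h : ℝ)..(((m + 1 : ℕ) : ℝ) * h), g (⌈t / h⌉₊ * h)
        = ∫ t in (m * h : ℝ)..(((m + 1 : ℕ) : ℝ) * h), g (((m + 1 : ℕ) : ℝ) * h) :=
      intervalIntegral.integral_congr_ae (Filter.Eventually.of_forall fun t ht => (hc ht).symm)
    rw [this, intervalIntegral.integral_const]
    push_cast
    simp only [smul_eq_mul]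
    ring

theorem aux_bound {t s b : ℝ} (ht : 0 < t) (hts : t ≤ s) (hsb : s ≤ b) (hb : b < π) :
    |Real.log (2 * Real.sin s)| ≤
      Real.log 2 + |Real.log (2 * Real.sin t)| + |Real.log (2 * Real.sin b)| := by
  have hst : 0 < Real.sin t := Real.sin_pos_of_pos_of_lt_pi ht (by linarith)
  have hsb' : 0 < Real.sin b := Real.sin_pos_of_pos_of_lt_pi (by linarith) hb
  have hss : 0 < Real.sin s := Real.sin_pos_of_pos_of_lt_pi (by linarith) (by linarith)
  have hmin : min (Real.sin t) (Real.sin b) ≤ Real.sin s :=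
    strictConcaveOn_sin_Icc.concaveOn.min_le_of_mem_Icc ⟨ht.le, by linarith⟩
      ⟨by linarith, hb.le⟩ ⟨hts, hsb⟩
  have hl2 : 0 < Real.log 2 := Real.log_pos (by norm_num)
  have hup : Real.log (2 * Real.sin s) ≤ Real.log 2 :=
    Real.log_le_log (by positivity) (by linarith [Real.sin_le_one s])
  have h1 := neg_abs_le (Real.log (2 * Real.sin t))
  have h2 := neg_abs_le (Real.log (2 * Real.sin b))
  have h3 := abs_nonneg (Real.log (2 * Real.sin t))
  have h4 := abs_nonneg (Real.log (2 * Real.sin b))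
  rw [abs_le]
  refine ⟨?_, by linarith⟩
  rcases min_le_iff.1 hmin with h | h
  · have := Real.log_le_log (by positivity) (mul_le_mul_of_nonneg_left h (by norm_num : (0:ℝ) ≤ 2))
    linarith
  · have := Real.log_le_log (by positivity) (mul_le_mul_of_nonneg_left h (by norm_num : (0:ℝ) ≤ 2))
    linarith

theorem aux_integrable (b : ℝ) :
    IntervalIntegrable (fun t => Real.log (2 * Real.sin t)) MeasureTheory.volume 0 b := by
  have : (fun t => Real.log (2 * Real.sin t)) = Real.log ∘ (fun t => 2 * Real.sin t) := rfl
  rw [this]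
  apply MeromorphicOn.intervalIntegrable_log
  intro x _
  apply AnalyticAt.meromorphicAt
  fun_prop

theorem log_sin_sum_limit (a : ℝ) (ha : 0 < a) (ha' : a < π) (an : ℕ → ℕ)
    (hbound : ∀ n : ℕ, 2 * an n ≤ n - 1)
    (hlim : Tendsto (fun n : ℕ => 2 * π * (an n : ℝ) / n) atTop (nhds a)) :
    Tendsto (fun n : ℕ => π / n *
        ∑ k ∈ Finset.Icc 1 (2 * an n), Real.log (2 * Real.sin (k * π / n)))
      atTop (nhds (∫ t in (0 : ℝ)..a, Real.log |2 * Real.sin t|)) ∧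
    (∫ t in (0 : ℝ)..a, Real.log |2 * Real.sin t|) = -lob a := by
  refine ⟨?_, by simp [lob]⟩
  obtain ⟨b, hab, hb⟩ := exists_between ha'
  have hpi := Real.pi_pos
  set g : ℝ → ℝ := fun t => Real.log (2 * Real.sin t) with hg
  have hgm : Measurable g := by fun_prop
  have hlim' : Tendsto (fun n : ℕ => ((2 * an n : ℕ) : ℝ) * (π / n)) atTop (nhds a) := by
    refine hlim.congr fun n => ?_
    push_cast; ring
  let F : ℕ → ℝ → ℝ := fun n =>
    (Set.Ioc (0:ℝ) (((2 * an n : ℕ) : ℝ) * (π / n))).indicator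
      (fun t => g (⌈t / (π / n)⌉₊ * (π / n)))
  have hF : ∀ n : ℕ, 0 < n → ∫ t, F n t = π / n *
        ∑ k ∈ Finset.Icc 1 (2 * an n), Real.log (2 * Real.sin (k * π / n)) := by
    intro n hn
    have hn' : (0:ℝ) < n := by exact_mod_cast hn
    rw [MeasureTheory.integral_indicator measurableSet_Ioc,
      ← intervalIntegral.integral_of_le (by positivity),
      (aux_sum_eq_integral g (π / n) (by positivity) (2 * an n)).2]
    simp only [hg, mul_div_assoc]
  have hL : (∫ t in (0 : ℝ)..a, Real.log |2 * Real.sin t|)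
      = ∫ t, (Set.Ioc (0:ℝ) a).indicator g t := by
    rw [MeasureTheory.integral_indicator measurableSet_Ioc,
      ← intervalIntegral.integral_of_le ha.le]
    simp only [hg, Real.log_abs]
  rw [hL]
  have key : Tendsto (fun n => ∫ t, F n t) atTop
      (nhds (∫ t, (Set.Ioc (0:ℝ) a).indicator g t)) := by
    refine MeasureTheory.tendsto_integral_filter_of_dominated_convergence
      ((Set.Ioc (0:ℝ) b).indicator fun t => Real.log 2 + |g t| + |g b|) ?_ ?_ ?_ ?_
    · refine Eventually.of_forall fun n => ?_
      refine Measurable.aestronglyMeasurable ?_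
      refine Measurable.indicator ?_ measurableSet_Ioc
      fun_prop
    · filter_upwards [eventually_gt_atTop 0, hlim'.eventually (gt_mem_nhds hab)] with n hn hnb
      have hn' : (0:ℝ) < n := by exact_mod_cast hn
      have hh : 0 < π / n := by positivity
      refine Eventually.of_forall fun t => ?_
      by_cases ht : t ∈ Set.Ioc (0:ℝ) (((2 * an n : ℕ) : ℝ) * (π / n))
      · have ht2 : t ∈ Set.Ioc (0:ℝ) b := ⟨ht.1, ht.2.trans hnb.le⟩
        simp only [F, Set.indicator_of_mem ht, Set.indicator_of_mem ht2, Real.norm_eq_abs]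
        refine aux_bound ht.1 ?_ ?_ hb
        · exact (div_le_iff₀ hh).1 (Nat.le_ceil _)
        · refine le_trans ?_ hnb.le
          refine mul_le_mul_of_nonneg_right ?_ hh.le
          exact_mod_cast Nat.ceil_le.2 ((div_le_iff₀ hh).2 ht.2)
      · simp only [F, Set.indicator_of_notMem ht, norm_zero]
        refine Set.indicator_nonneg (fun x _ => ?_) t
        have hl2 : 0 < Real.log 2 := Real.log_pos (by norm_num)
        positivity
    · rw [MeasureTheory.integrable_indicator_iff measurableSet_Ioc,
        ← intervalIntegrable_iff_integrableOn_Ioc_of_le (by linarith)]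
      exact (intervalIntegrable_const.add (aux_integrable b).abs).add intervalIntegrable_const
    · have hne : ∀ᵐ t : ℝ, t ≠ a := by
        simp [MeasureTheory.ae_iff]
      filter_upwards [hne] with t hta
      rcases le_or_gt t 0 with h0 | h0
      · have h1 : ∀ c : ℝ, t ∉ Set.Ioc (0:ℝ) c := fun c h => absurd h.1 (not_lt.2 h0)
        simp only [F, Set.indicator_of_notMem (h1 _)]
        exact tendsto_const_nhds
      rcases lt_or_gt_of_ne hta with h | h
      · rw [Set.indicator_of_mem (show t ∈ Set.Ioc (0:ℝ) a from ⟨h0, h.le⟩)]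
        have hst : 0 < Real.sin t := Real.sin_pos_of_pos_of_lt_pi h0 (by linarith)
        have hcont : ContinuousAt g t := by
          have : 2 * Real.sin t ≠ 0 := by positivity
          exact ContinuousAt.log (by fun_prop) this
        have hceil : Tendsto (fun n : ℕ => (⌈t / (π / n)⌉₊ : ℝ) * (π / n)) atTop (nhds t) := by
          have h1 := (tendsto_nat_ceil_mul_div_atTop (R := ℝ) (a := t / π) (by positivity)).comp
            tendsto_natCast_atTop_atTop
          have h2 := h1.mul_const π
          rw [div_mul_cancel₀ t hpi.ne'] at h2
          refine h2.congr fun n => ?_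
          simp only [Function.comp]
          rw [show t / (π / (n:ℝ)) = t / π * n by rw [div_div_eq_mul_div]; ring]
          ring
        refine (hcont.tendsto.comp hceil).congr' ?_
        filter_upwards [hlim'.eventually (lt_mem_nhds h)] with n hn
        simp only [F]
        rw [Set.indicator_of_mem (show t ∈ Set.Ioc (0:ℝ) _ from ⟨h0, hn.le⟩)]
        rfl
      · rw [Set.indicator_of_notMem (fun hh => absurd hh.2 (not_le.2 h))]
        refine tendsto_const_nhds.congr' ?_
        filter_upwards [hlim'.eventually (gt_mem_nhds h)] with n hn
        simp only [F]
        rw [Set.indicator_of_notMem (fun hh => absurd hh.2 (not_le.2 hn))]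
  refine key.congr' ?_
  filter_upwards [eventually_gt_atTop 0] with n hn
  exact hF n hn

end
end

section
/- Let 0 < β < α < π. Then the quantum binomial [⌊αn/π⌋ ¦ ⌊βn/π⌋], taken with respect to ξ = exp(π√−1/n), is a positive real number for all sufficiently large n, and lim_{n→∞} (π/n) · log [⌊αn/π⌋ ¦ ⌊βn/π⌋] = −Λ(α) + Λ(β) + Λ(α−β). -/
open Complex Finset Filter
open scoped Matrix Kronecker Real

noncomputable section

/-- `2 sin(π i / n)`. -/
def sn (n i : ℕ) : ℝ := 2 * Real.sin (i * (π / n))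

lemma sn_pos {n i : ℕ} (hi : 0 < i) (hin : i < n) : 0 < sn n i := by
  have hn : (0 : ℝ) < n := by exact_mod_cast hi.trans hin
  have hi' : (0 : ℝ) < i := by exact_mod_cast hi
  have hin' : (i : ℝ) < n := by exact_mod_cast hin
  unfold sn
  have : 0 < Real.sin (i * (π / n)) := by
    apply Real.sin_pos_of_pos_of_lt_pi
    · positivity
    · rw [← mul_div_assoc, div_lt_iff₀ hn]
      nlinarith [Real.pi_pos]
  linarith

lemma qn_nat (n i : ℕ) : qn n (i : ℂ) = (sn n i : ℂ) * Complex.I := by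
  unfold qn xic sn
  have h1 : (Real.pi : ℂ) * Complex.I * (i : ℂ) / n = ((i * (π / n) : ℝ) : ℂ) * Complex.I := by
    push_cast; ring
  have h2 : (Real.pi : ℂ) * Complex.I * (-(i : ℂ)) / n = (-(i * (π / n) : ℝ) : ℂ) * Complex.I := by
    push_cast; ring
  rw [h1, h2]
  push_cast
  rw [Complex.sin]
  ring_nf
  simp only [Complex.I_sq]
  ring

lemma qbin_nat (n B k : ℕ) (hk : k < n) :
    qbin n ((B + k : ℕ) : ℂ) (B : ℂ) =
      (((∏ j ∈ Finset.range k, sn n (B + j + 1)) / ∏ j ∈ Finset.range k, sn n (j + 1) : ℝ) : ℂ) := by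
  have h : ∃ k' : ℕ, k' < n ∧ ((B + k : ℕ) : ℂ) - (B : ℂ) = (k' : ℂ) := ⟨k, hk, by push_cast; ring⟩
  have hc : h.choose = k := by
    have := h.choose_spec.2
    have h2 : ((B + k : ℕ) : ℂ) - (B : ℂ) = (k : ℂ) := by push_cast; ring
    exact_mod_cast this.symm.trans h2
  unfold qbin
  rw [dif_pos h, hc]
  have key : ∀ j ∈ Finset.range k,
      qn n (((B + k : ℕ) : ℂ) - (j : ℂ)) / qn n (((B + k : ℕ) : ℂ) - (B : ℂ) - (j : ℂ)) =
      ((sn n (B + (k - 1 - j) + 1) / sn n ((k - 1 - j) + 1) : ℝ) : ℂ) := by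
    intro j hj
    have hj := Finset.mem_range.1 hj
    obtain ⟨d, rfl⟩ : ∃ d, k = d + j + 1 := ⟨k - 1 - j, by omega⟩
    have e : d + j + 1 - 1 - j = d := by omega
    rw [e]
    have e1 : ((B + (d + j + 1) : ℕ) : ℂ) - (j : ℂ) = ((B + d + 1 : ℕ) : ℂ) := by push_cast; ring
    have e2 : ((B + (d + j + 1) : ℕ) : ℂ) - (B : ℂ) - (j : ℂ) = ((d + 1 : ℕ) : ℂ) := by
      push_cast; ring
    rw [e1, e2, qn_nat, qn_nat, mul_div_mul_right _ _ Complex.I_ne_zero]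
    push_cast; rfl
  rw [Finset.prod_congr rfl key, ← Complex.ofReal_prod]
  rw [Finset.prod_range_reflect (fun j => sn n (B + j + 1) / sn n (j + 1)) k,
    Finset.prod_div_distrib]

/-- Riemann sum of `log |2 sin|`. -/
def rsum (n m : ℕ) : ℝ := ∑ i ∈ Finset.range m, Real.log |sn n (i + 1)|

lemma log_quot (n B k : ℕ) (h : B + k < n) :
    Real.log ((∏ j ∈ Finset.range k, sn n (B + j + 1)) / ∏ j ∈ Finset.range k, sn n (j + 1)) =
      rsum n (B + k) - rsum n B - rsum n k := by
  have p1 : ∀ j ∈ Finset.range k, sn n (B + j + 1) ≠ 0 := fun j hj =>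
    (sn_pos (by omega) (by have := Finset.mem_range.1 hj; omega)).ne'
  have p2 : ∀ j ∈ Finset.range k, sn n (j + 1) ≠ 0 := fun j hj =>
    (sn_pos (by omega) (by have := Finset.mem_range.1 hj; omega)).ne'
  rw [Real.log_div (Finset.prod_ne_zero_iff.2 p1) (Finset.prod_ne_zero_iff.2 p2),
    Real.log_prod p1, Real.log_prod p2]
  unfold rsum
  rw [Finset.sum_range_add]
  simp only [Real.log_abs]
  ring

lemma sin_lower {c s : ℝ} (hc0 : 0 < c) (hc : c < π) (hs0 : 0 ≤ s) (hs : s ≤ c) :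
    Real.sin c / c * s ≤ Real.sin s := by
  have h1 : (0 : ℝ) ∈ Set.Icc 0 π := ⟨le_rfl, Real.pi_pos.le⟩
  have h2 : c ∈ Set.Icc 0 π := ⟨hc0.le, hc.le⟩
  have h3 : 0 ≤ 1 - s / c := by rw [sub_nonneg, div_le_one hc0]; exact hs
  have h4 : 0 ≤ s / c := by positivity
  have h5 : 1 - s / c + s / c = 1 := by ring
  have := strictConcaveOn_sin_Icc.concaveOn.2 h1 h2 h3 h4 h5
  simp only [smul_eq_mul, Real.sin_zero, mul_zero, zero_add] at this
  rw [div_mul_cancel₀ _ hc0.ne'] at this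
  calc _ = s / c * Real.sin c := by ring
    _ ≤ _ := this

lemma integral_step (h : ℝ) (hh : 0 < h) (f : ℝ → ℝ) (m : ℕ) :
    ∫ t in (0 : ℝ)..(m * h), f (⌈t / h⌉₊ * h) = h * ∑ i ∈ Finset.range m, f (((i + 1 : ℕ) : ℝ) * h) := by
  have cell : ∀ k : ℕ, Set.EqOn (fun _ : ℝ => f (((k + 1 : ℕ) : ℝ) * h))
      (fun t => f (⌈t / h⌉₊ * h)) (Set.uIoc ((k : ℝ) * h) (((k + 1 : ℕ) : ℝ) * h)) := by
    intro k t ht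
    rw [Set.uIoc_of_le (by push_cast; nlinarith)] at ht
    have : ⌈t / h⌉₊ = k + 1 := by
      rw [Nat.ceil_eq_iff (by omega)]
      constructor
      · rw [lt_div_iff₀ hh]; simpa using ht.1
      · rw [div_le_iff₀ hh]; exact ht.2
    simp only [this]
  have := intervalIntegral.sum_integral_adjacent_intervals (μ := MeasureTheory.volume)
    (f := fun t => f (⌈t / h⌉₊ * h)) (a := fun k : ℕ => (k : ℝ) * h) (n := m)
    (fun k _ => (intervalIntegrable_const (c := f (((k + 1 : ℕ) : ℝ) * h))).congr (cell k))
  simp only [Nat.cast_zero, zero_mul] at this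
  rw [← this, Finset.mul_sum]
  refine Finset.sum_congr rfl fun k _ => ?_
  rw [← intervalIntegral.integral_congr_ae
    (Filter.Eventually.of_forall fun t ht => cell k ht), intervalIntegral.integral_const]
  push_cast
  rw [smul_eq_mul]
  ring

lemma tendsto_rsum (γ : ℝ) (h0 : 0 < γ) (hγ : γ < π) (m : ℕ → ℕ)
    (hm : Tendsto (fun n : ℕ => (m n : ℝ) * (π / n)) atTop (nhds γ)) :
    Tendsto (fun n : ℕ => π / n * rsum n (m n)) atTop (nhds (-lob γ)) := by
  obtain ⟨c, hc1, hc2⟩ := exists_between hγ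
  have hc0 : 0 < c := h0.trans hc1
  have hsc : 0 < Real.sin c := Real.sin_pos_of_pos_of_lt_pi hc0 hc2
  set f : ℝ → ℝ := fun t => Real.log |2 * Real.sin t| with hf
  have hh : Tendsto (fun n : ℕ => π / (n : ℝ)) atTop (nhds 0) :=
    tendsto_const_div_atTop_nhds_zero_nat π
  have ev : ∀ᶠ n : ℕ in atTop, 0 < n ∧ (m n : ℝ) * (π / n) < c :=
    (eventually_gt_atTop 0).and (hm.eventually_lt_const hc1)
  have hfm : Measurable f := by
    simp only [hf]
    fun_prop
  have main : Tendsto (fun n : ℕ => ∫ t in (0 : ℝ)..c,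
      Set.indicator {x | x ≤ (m n : ℝ) * (π / n)} (fun t => f (⌈t / (π / n)⌉₊ * (π / n))) t) atTop
      (nhds (∫ t in (0 : ℝ)..c, Set.indicator {x | x ≤ γ} f t)) := by
    apply intervalIntegral.tendsto_integral_filter_of_dominated_convergence
      (fun t => Real.log 2 + |Real.log (2 * (Real.sin c / c)) + Real.log t|)
    · refine Filter.Eventually.of_forall fun n => ?_
      apply Measurable.aestronglyMeasurable
      apply Measurable.indicator _ (measurableSet_le measurable_id measurable_const)
      refine hfm.comp ?_
      refine Measurable.mul_const ?_ _
      exact measurable_from_nat.comp (Nat.measurable_ceil.comp (measurable_id.div_const _))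
    · filter_upwards [ev] with n hn
      refine Filter.Eventually.of_forall fun t ht => ?_
      rw [Set.uIoc_of_le hc0.le] at ht
      have hl2 : 0 < Real.log 2 := Real.log_pos (by norm_num)
      by_cases htm : t ≤ (m n : ℝ) * (π / n)
      · rw [Set.indicator_of_mem (by exact htm)]
        have hp : 0 < π / (n : ℝ) := div_pos Real.pi_pos (by exact_mod_cast hn.1)
        set s : ℝ := ⌈t / (π / n)⌉₊ * (π / n) with hs
        have hts : t ≤ s := by
          rw [hs, ← div_le_iff₀ hp]; exact Nat.le_ceil _
        have hsm : s ≤ (m n : ℝ) * (π / n) := by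
          rw [hs]
          refine mul_le_mul_of_nonneg_right ?_ hp.le
          exact_mod_cast Nat.ceil_le.2 ((div_le_iff₀ hp).2 htm)
        have hs0 : 0 < s := ht.1.trans_le hts
        have hlow := sin_lower hc0 hc2 hs0.le (hsm.trans hn.2.le)
        have hr : 0 < Real.sin c / c := by positivity
        have hlow2 : 2 * (Real.sin c / c) * t ≤ 2 * Real.sin s := by
          nlinarith
        have ht0 := ht.1
        have hpos : 0 < 2 * (Real.sin c / c) * t := by positivity
        have a1 : Real.log (2 * (Real.sin c / c) * t) ≤ Real.log (2 * Real.sin s) :=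
          Real.log_le_log hpos hlow2
        rw [Real.log_mul (by positivity) ht0.ne'] at a1
        have a2 : Real.log (2 * Real.sin s) ≤ Real.log 2 :=
          Real.log_le_log (hpos.trans_le hlow2) (by linarith [Real.sin_le_one s])
        have a3 := neg_abs_le (Real.log (2 * (Real.sin c / c)) + Real.log t)
        have a4 := abs_nonneg (Real.log (2 * (Real.sin c / c)) + Real.log t)
        rw [Real.norm_eq_abs]
        simp only [hf, Real.log_abs]
        rw [abs_le]
        constructor <;> linarith
      · rw [Set.indicator_of_notMem (by exact htm)]
        simp only [norm_zero]
        positivity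
    · exact intervalIntegrable_const.add
        ((intervalIntegrable_const.add intervalIntegral.intervalIntegrable_log').abs)
    · filter_upwards [MeasureTheory.Measure.ae_ne MeasureTheory.volume γ] with t htγ ht
      rw [Set.uIoc_of_le hc0.le] at ht
      rcases lt_or_gt_of_ne htγ with hlt | hgt
      · rw [Set.indicator_of_mem (by exact hlt.le)]
        have hcont : ContinuousAt f t := by
          have hst : 0 < Real.sin t := Real.sin_pos_of_pos_of_lt_pi ht.1 (ht.2.trans_lt hc2)
          have : |2 * Real.sin t| ≠ 0 := by positivity
          simp only [hf]
          fun_prop (disch := assumption)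
        have hst : Tendsto (fun n : ℕ => (⌈t / (π / n)⌉₊ : ℝ) * (π / n)) atTop (nhds t) := by
          refine tendsto_of_tendsto_of_tendsto_of_le_of_le' (g := fun _ => t)
            (h := fun n : ℕ => t + π / n) tendsto_const_nhds ?_ ?_ ?_
          · simpa using hh.const_add t
          · filter_upwards [eventually_gt_atTop 0] with n hn
            have hp : 0 < π / (n : ℝ) := div_pos Real.pi_pos (by exact_mod_cast hn)
            rw [← div_le_iff₀ hp]; exact Nat.le_ceil _
          · filter_upwards [eventually_gt_atTop 0] with n hn
            have hp : 0 < π / (n : ℝ) := div_pos Real.pi_pos (by exact_mod_cast hn)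
            have := (Nat.ceil_lt_add_one (a := t / (π / n)) (div_nonneg ht.1.le hp.le)).le
            calc _ ≤ (t / (π / n) + 1) * (π / n) := mul_le_mul_of_nonneg_right this hp.le
              _ = _ := by rw [add_mul, div_mul_cancel₀ _ hp.ne', one_mul]
        refine (hcont.tendsto.comp hst).congr' ?_
        filter_upwards [hm.eventually_const_lt hlt] with n hn
        rw [Set.indicator_of_mem (by exact hn.le)]
        rfl
      · rw [Set.indicator_of_notMem (by exact not_le.2 hgt)]
        refine tendsto_const_nhds.congr' ?_
        filter_upwards [hm.eventually_lt_const hgt] with n hn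
        rw [Set.indicator_of_notMem (by exact not_le.2 hn)]
  rw [intervalIntegral.integral_indicator ⟨h0.le, hc1.le⟩] at main
  have hlob : -lob γ = ∫ t in (0 : ℝ)..γ, f t := by simp [lob, hf]
  rw [hlob]
  refine main.congr' ?_
  filter_upwards [ev] with n hn
  have hp : 0 < π / (n : ℝ) := div_pos Real.pi_pos (by exact_mod_cast hn.1)
  rw [intervalIntegral.integral_indicator ⟨by positivity, hn.2.le⟩, integral_step _ hp]
  rfl

lemma tendsto_floor (α : ℝ) (h : 0 < α) :
    Tendsto (fun n : ℕ => ((Nat.floor (α * n / π) : ℕ) : ℝ) * (π / n)) atTop (nhds α) := by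
  have hh : Tendsto (fun n : ℕ => π / (n : ℝ)) atTop (nhds 0) :=
    tendsto_const_div_atTop_nhds_zero_nat π
  refine tendsto_of_tendsto_of_tendsto_of_le_of_le' (h := fun _ => α)
    (g := fun n : ℕ => α - π / n) (by simpa using hh.const_sub α) tendsto_const_nhds ?_ ?_
  all_goals
    filter_upwards [eventually_gt_atTop 0] with n hn
    have hn' : (0 : ℝ) < n := by exact_mod_cast hn
    have hpi := Real.pi_pos
    have hp : 0 < π / (n : ℝ) := div_pos hpi hn'
    have e : α * n / π * (π / n) = α := by field_simp
  · have := (Nat.lt_floor_add_one (α * n / π)).le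
    have := mul_le_mul_of_nonneg_right this hp.le
    rw [e] at this
    linarith
  · have := Nat.floor_le (a := α * n / π) (by positivity)
    have := mul_le_mul_of_nonneg_right this hp.le
    rwa [e] at this

theorem qbin_floor_asymptotics (α β : ℝ) (hβ : 0 < β) (hβα : β < α) (hα : α < π) :
    (∀ᶠ n : ℕ in atTop,
        0 < (qbin n ((Nat.floor (α * n / π) : ℕ) : ℂ)
              ((Nat.floor (β * n / π) : ℕ) : ℂ)).re ∧
        (qbin n ((Nat.floor (α * n / π) : ℕ) : ℂ)
              ((Nat.floor (β * n / π) : ℕ) : ℂ)).im = 0) ∧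
    Tendsto (fun n : ℕ => π / n *
        Real.log ((qbin n ((Nat.floor (α * n / π) : ℕ) : ℂ)
          ((Nat.floor (β * n / π) : ℕ) : ℂ)).re))
      atTop (nhds (-lob α + lob β + lob (α - β))) := by
  set A : ℕ → ℕ := fun n => Nat.floor (α * n / π) with hA
  set B : ℕ → ℕ := fun n => Nat.floor (β * n / π) with hB
  have hpi := Real.pi_pos
  have hα0 : 0 < α := hβ.trans hβα
  have tA := tendsto_floor α hα0
  have tB := tendsto_floor β hβ
  have hBA : ∀ n, B n ≤ A n := fun n => Nat.floor_le_floor (by gcongr)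
  have hAn : ∀ n : ℕ, 0 < n → A n < n := by
    intro n hn
    have hn' : (0 : ℝ) < n := by exact_mod_cast hn
    refine (Nat.floor_lt (by positivity)).2 ?_
    rw [div_lt_iff₀ hpi]
    nlinarith
  have tk : Tendsto (fun n : ℕ => ((A n - B n : ℕ) : ℝ) * (π / n)) atTop (nhds (α - β)) := by
    refine (tA.sub tB).congr fun n => ?_
    rw [Nat.cast_sub (hBA n)]
    ring
  have hq : ∀ n : ℕ, 0 < n → qbin n ((A n : ℕ) : ℂ) ((B n : ℕ) : ℂ) =
      (((∏ j ∈ Finset.range (A n - B n), sn n (B n + j + 1)) /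
        ∏ j ∈ Finset.range (A n - B n), sn n (j + 1) : ℝ) : ℂ) := by
    intro n hn
    rw [← qbin_nat n (B n) (A n - B n) (by have := hAn n hn; omega), Nat.add_sub_cancel' (hBA n)]
  constructor
  · filter_upwards [eventually_gt_atTop 0] with n hn
    change 0 < (qbin n ((A n : ℕ) : ℂ) ((B n : ℕ) : ℂ)).re ∧
      (qbin n ((A n : ℕ) : ℂ) ((B n : ℕ) : ℂ)).im = 0
    rw [hq n hn]
    refine ⟨?_, Complex.ofReal_im _⟩
    rw [Complex.ofReal_re]
    have h1 := hAn n hn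
    have h2 := hBA n
    refine div_pos (Finset.prod_pos fun j hj => ?_) (Finset.prod_pos fun j hj => ?_)
    all_goals
      have := Finset.mem_range.1 hj
      exact sn_pos (by omega) (by omega)
  · have lim := ((tendsto_rsum α hα0 hα A tA).sub (tendsto_rsum β hβ (hβα.trans hα) B tB)).sub
      (tendsto_rsum (α - β) (by linarith) (by linarith) _ tk)
    have e : -lob α - -lob β - -lob (α - β) = -lob α + lob β + lob (α - β) := by ring
    rw [e] at lim
    refine lim.congr' ?_
    filter_upwards [eventually_gt_atTop 0] with n hn
    change _ = π / n * Real.log (qbin n ((A n : ℕ) : ℂ) ((B n : ℕ) : ℂ)).re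
    have h1 := hAn n hn
    have h2 := hBA n
    rw [hq n hn, Complex.ofReal_re, log_quot n _ _ (by omega), Nat.add_sub_cancel' (hBA n)]
    ring

end
end
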